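/- arXiv:2306.16889 — 3 statements merged into one kernel-verified Lean document; each statement's English description precedes it below -/
import Mathlib

section
/- For all real x, y with x/y ≥ 1, the series ∑_{k=1}^∞ (27xy)^k / (k² (x+y)^{2k} C(3k,k)) equals 6·arctan²(√3·y^{1/3} / (2x^{1/3} − y^{1/3})) − (1/2)·log²((x+y)/(x^{1/3}+y^{1/3})³). -/
open Real

/-!
Put `t = (y / x) ^ (1 / 3) ∈ (0, 1]`, so that the series is `S (z t)` with
`S z = ∑ zⁿ / (n² C(3n, n))` and `z t = 27 t³ / (1 + t³)²`. Since `1 / (n C(3n, n))` is the Beta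
integral `2 / 3 * ∫₀¹ u²ⁿ⁻¹ (1 - u)ⁿ⁻¹`, a geometric series gives
`S' z = 2 / 3 * ∫₀¹ u / (1 - z u² (1 - u))`. At `z = z t` the cubic denominator has the root
`u = -(1 - t + t²) / (3 t)`, so partial fractions evaluate the integral, and `d/dt S (z t)` turns
out to be the derivative of the closed form in `t`. Both sides vanish at `t = 0`, hence agree for
`t < 1`, and by monotone convergence also at `t = 1`, where `z t = 27 / 4` is the radius of
convergence.
-/

open Set Filter Topology MeasureTheory
open scoped Nat

section Series

theorem hasSum_of_tendsto_of_le {ι α : Type*} {l : Filter α} [l.NeBot] {g : ι → α → ℝ}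
    {g' : ι → ℝ} {f : α → ℝ} {L : ℝ} (hg : ∀ i, Tendsto (g i) l (𝓝 (g' i)))
    (hnonneg : ∀ᶠ a in l, ∀ i, 0 ≤ g i a) (hle : ∀ᶠ a in l, ∀ i, g i a ≤ g' i)
    (hsum : ∀ᶠ a in l, HasSum (g · a) (f a)) (hf : Tendsto f l (𝓝 L)) : HasSum g' L := by
  have hg'_nonneg (i : ι) : 0 ≤ g' i :=
    ge_of_tendsto (hg i) (hnonneg.mono fun a ha ↦ ha i)
  have hpartial (s : Finset ι) : ∑ i ∈ s, g' i ≤ L := by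
    refine le_of_tendsto_of_tendsto (tendsto_finsetSum s fun i _ ↦ hg i) hf ?_
    filter_upwards [hnonneg, hsum] with a ha hfa
    exact sum_le_hasSum s (fun i _ ↦ ha i) hfa
  have hsummable : Summable g' := summable_of_sum_le hg'_nonneg hpartial
  have hlim : Tendsto (fun a ↦ ∑' i, g i a) l (𝓝 (∑' i, g' i)) := by
    refine tendsto_tsum_of_dominated_convergence hsummable hg ?_
    filter_upwards [hnonneg, hle] with a ha ha' i
    rw [Real.norm_of_nonneg (ha i)]
    exact ha' i
  have hlim' : Tendsto (fun a ↦ ∑' i, g i a) l (𝓝 L) :=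
    hf.congr' (hsum.mono fun a ha ↦ ha.tsum_eq.symm)
  exact tendsto_nhds_unique hlim hlim' ▸ hsummable.hasSum

variable {𝕜 : Type*} [RCLike 𝕜]

theorem summable_div_succ_mul_pow_succ {c : ℕ → 𝕜} {z : 𝕜}
    (hc : Summable fun k ↦ ‖c k * z ^ k‖) :
    Summable fun k : ℕ ↦ c k / (k + 1) * z ^ (k + 1) := by
  refine .of_norm_bounded (hc.mul_right ‖z‖) fun k ↦ ?_
  have hk : 1 ≤ ‖(k + 1 : 𝕜)‖ := by
    rw [← Nat.cast_succ, RCLike.norm_natCast]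
    simp
  rw [pow_succ, ← mul_assoc, norm_mul, norm_mul, norm_div, norm_mul]
  gcongr
  exact div_le_self (norm_nonneg _) hk

theorem hasDerivAt_tsum_div_succ_mul_pow_succ {c : ℕ → 𝕜} {r : ℝ}
    (hc : Summable fun k ↦ ‖c k‖ * r ^ k) {z : 𝕜} (hz : ‖z‖ < r) :
    HasDerivAt (fun w ↦ ∑' k : ℕ, c k / (k + 1) * w ^ (k + 1)) (∑' k, c k * z ^ k) z := by
  have hr : 0 < r := (norm_nonneg z).trans_lt hz
  refine hasDerivAt_tsum_of_isPreconnected (t := Metric.ball 0 r)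
    (g := fun k w ↦ c k / (k + 1) * w ^ (k + 1)) (g' := fun k w ↦ c k * w ^ k) hc
    Metric.isOpen_ball Metric.isPreconnected_ball (fun k w _ ↦ ?_) (fun k w hw ↦ ?_)
    (Metric.mem_ball_self hr) ?_ (mem_ball_zero_iff.2 hz)
  · have hk : (k + 1 : 𝕜) ≠ 0 := by exact_mod_cast k.succ_ne_zero
    refine ((hasDerivAt_pow (k + 1) w).const_mul (c k / (k + 1))).congr_deriv ?_
    push_cast
    field_simp
  · rw [norm_mul, norm_pow]
    gcongr
    exact (mem_ball_zero_iff.1 hw).le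
  · simp

theorem hasSum_integral_mul_pow {f w : ℝ → 𝕜} {a b ρ : ℝ}
    (hf : IntervalIntegrable f volume a b)
    (hw : AEStronglyMeasurable w (volume.restrict (uIoc a b))) (hρ : ρ < 1)
    (hwρ : ∀ u ∈ uIoc a b, ‖w u‖ ≤ ρ) :
    HasSum (fun k : ℕ ↦ ∫ u in a..b, f u * w u ^ k) (∫ u in a..b, f u / (1 - w u)) := by
  have hgeom {u : ℝ} (hu : u ∈ uIoc a b) : Summable fun k : ℕ ↦ ρ ^ k :=
    summable_geometric_of_lt_one ((norm_nonneg _).trans (hwρ u hu)) hρ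
  refine intervalIntegral.hasSum_integral_of_dominated_convergence
    (fun k u ↦ ‖f u‖ * ρ ^ k) (fun k ↦ ?_) (fun k ↦ .of_forall fun u hu ↦ ?_)
    (.of_forall fun u hu ↦ (hgeom hu).mul_left _) ?_ (.of_forall fun u hu ↦ ?_)
  · exact hf.def'.aestronglyMeasurable.mul (hw.pow k)
  · rw [norm_mul, norm_pow]
    gcongr
    exact hwρ u hu
  · simp_rw [tsum_mul_left]
    exact hf.norm.mul_const _
  · rw [div_eq_mul_inv]
    exact (hasSum_geometric_of_norm_lt_one ((hwρ u hu).trans_lt hρ)).mul_left _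

end Series

section Coefficients

theorem integral_pow_mul_one_sub_pow (m n : ℕ) :
    ∫ u in (0 : ℝ)..1, u ^ m * (1 - u) ^ n = (m ! * n ! : ℝ) / (m + n + 1)! := by
  have hbeta : Complex.betaIntegral (m + 1) (n + 1)
      = ((∫ u in (0 : ℝ)..1, u ^ m * (1 - u) ^ n : ℝ) : ℂ) := by
    rw [← intervalIntegral.integral_ofReal]
    simp [Complex.betaIntegral]
  have hGamma := Complex.Gamma_mul_Gamma_eq_betaIntegral (s := m + 1) (t := n + 1)
    (by simpa using m.cast_add_one_pos) (by simpa using n.cast_add_one_pos)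
  have hsum : (m + 1 + (n + 1) : ℂ) = (m + n + 1 : ℕ) + 1 := by push_cast; ring
  rw [hsum, hbeta] at hGamma
  simp only [Complex.Gamma_nat_eq_factorial] at hGamma
  rw [eq_div_iff (by positivity), mul_comm]
  exact_mod_cast hGamma.symm

/-- The coefficient `1 / (n C(3n, n))`, `n = k + 1`, of `z ^ k` in the derivative of
`∑ zⁿ / (n² C(3n, n))`. -/
noncomputable def derivCoeff (k : ℕ) : ℝ :=
  1 / ((k + 1) * ((3 * (k + 1)).choose (k + 1) : ℕ))

theorem derivCoeff_nonneg (k : ℕ) : 0 ≤ derivCoeff k := by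
  unfold derivCoeff
  positivity

theorem derivCoeff_eq_integral (k : ℕ) :
    derivCoeff k = ∫ u in (0 : ℝ)..1, 2 / 3 * u * (u ^ 2 * (1 - u)) ^ k := by
  have hbeta : ∫ u in (0 : ℝ)..1, 2 / 3 * u * (u ^ 2 * (1 - u)) ^ k
      = 2 / 3 * (((2 * k + 1)! * k ! : ℝ) / (3 * k + 2)!) := by
    rw [show 3 * k + 2 = 2 * k + 1 + k + 1 by ring, ← integral_pow_mul_one_sub_pow,
      ← intervalIntegral.integral_const_mul]
    congr! 2
    rw [mul_pow]
    ring
  rw [hbeta, derivCoeff, Nat.cast_choose ℝ (by lia),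
    show 3 * (k + 1) - (k + 1) = 2 * k + 1 + 1 by lia, show 3 * (k + 1) = 3 * k + 2 + 1 by ring]
  simp only [Nat.factorial_succ (2 * k + 1), Nat.factorial_succ (3 * k + 2), Nat.factorial_succ k]
  push_cast
  field_simp
  ring

theorem sq_mul_one_sub_le {u : ℝ} (hu : 0 ≤ u) : u ^ 2 * (1 - u) ≤ 4 / 27 := by
  have h : 0 ≤ (3 * u - 2) ^ 2 * (3 * u + 1) := by positivity
  linarith

theorem hasSum_derivCoeff_mul_pow {z : ℝ} (hz : |z| < 27 / 4) :
    HasSum (fun k ↦ derivCoeff k * z ^ k)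
      (∫ u in (0 : ℝ)..1, 2 / 3 * u / (1 - z * (u ^ 2 * (1 - u)))) := by
  have hbound (u : ℝ) (hu : u ∈ uIoc 0 1) : ‖z * (u ^ 2 * (1 - u))‖ ≤ |z| * (4 / 27) := by
    rw [uIoc_of_le zero_le_one] at hu
    rw [norm_mul, norm_eq_abs, norm_eq_abs,
      abs_of_nonneg (mul_nonneg (sq_nonneg u) (sub_nonneg.2 hu.2))]
    gcongr
    exact sq_mul_one_sub_le hu.1.le
  refine (hasSum_integral_mul_pow (Continuous.intervalIntegrable (by fun_prop) 0 1)
    (Continuous.aestronglyMeasurable (by fun_prop)) (by linarith) hbound).congr_fun fun k ↦ ?_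
  rw [derivCoeff_eq_integral, ← intervalIntegral.integral_mul_const]
  congr! 2 with u
  rw [mul_pow z]
  ring

/-- The series `∑ zⁿ / (n² C(3n, n))` over `n = k + 1`. -/
noncomputable def invChooseSeries (z : ℝ) : ℝ :=
  ∑' k : ℕ, derivCoeff k / (k + 1) * z ^ (k + 1)

theorem hasSum_invChooseSeries {z : ℝ} (hz : |z| < 27 / 4) :
    HasSum (fun k : ℕ ↦ derivCoeff k / (k + 1) * z ^ (k + 1)) (invChooseSeries z) :=
  (summable_div_succ_mul_pow_succ (hasSum_derivCoeff_mul_pow hz).summable.norm).hasSum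

theorem hasDerivAt_invChooseSeries {z : ℝ} (hz : |z| < 27 / 4) :
    HasDerivAt invChooseSeries
      (∫ u in (0 : ℝ)..1, 2 / 3 * u / (1 - z * (u ^ 2 * (1 - u)))) z := by
  obtain ⟨r, hzr, hr⟩ := exists_between hz
  have hr_pos : 0 < r := (abs_nonneg z).trans_lt hzr
  have hsummable : Summable fun k ↦ ‖derivCoeff k‖ * r ^ k := by
    simpa only [norm_of_nonneg (derivCoeff_nonneg _)] using
      (hasSum_derivCoeff_mul_pow (by rwa [abs_of_pos hr_pos])).summable
  rw [← (hasSum_derivCoeff_mul_pow hz).tsum_eq]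
  exact hasDerivAt_tsum_div_succ_mul_pow_succ hsummable hzr

end Coefficients

section Parametrisation

/-- The argument `27 t³ / (1 + t³)²` of the series, in terms of `t = (y / x) ^ (1 / 3)`. -/
noncomputable def cubicParam (t : ℝ) : ℝ := 27 * t ^ 3 / (1 + t ^ 3) ^ 2

theorem cubicParam_nonneg {t : ℝ} (ht : 0 ≤ t) : 0 ≤ cubicParam t := by
  unfold cubicParam
  positivity

theorem cubicParam_one : cubicParam 1 = 27 / 4 := by norm_num [cubicParam]

theorem cubicParam_lt {t : ℝ} (ht : t ∈ Ico 0 1) : cubicParam t < 27 / 4 := by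
  have hcube_nonneg : 0 ≤ t ^ 3 := pow_nonneg ht.1 3
  have hcube_lt : t ^ 3 < 1 := pow_lt_one₀ ht.1 ht.2 three_ne_zero
  have hsq : 0 < (1 - t ^ 3) ^ 2 := by
    have : 0 < 1 - t ^ 3 := sub_pos.2 hcube_lt
    positivity
  rw [cubicParam, div_lt_div_iff₀ (by positivity) (by norm_num)]
  linarith

theorem abs_cubicParam_lt {t : ℝ} (ht : t ∈ Ico 0 1) : |cubicParam t| < 27 / 4 := by
  rw [abs_of_nonneg (cubicParam_nonneg ht.1)]
  exact cubicParam_lt ht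

theorem hasDerivAt_cubicParam {t : ℝ} (ht : 1 + t ^ 3 ≠ 0) :
    HasDerivAt cubicParam (81 * t ^ 2 * (1 - t ^ 3) / (1 + t ^ 3) ^ 3) t := by
  have hnum : HasDerivAt (fun t : ℝ ↦ 27 * t ^ 3) (27 * (3 * t ^ 2)) t := by
    simpa using (hasDerivAt_pow 3 t).const_mul 27
  have hden : HasDerivAt (fun t : ℝ ↦ (1 + t ^ 3) ^ 2) (2 * (1 + t ^ 3) * (3 * t ^ 2)) t := by
    simpa using ((hasDerivAt_pow 3 t).const_add 1).fun_pow 2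
  refine (hnum.fun_div hden (by positivity)).congr_deriv ?_
  field_simp
  ring

theorem one_sub_add_sq_pos (t : ℝ) : 0 < 1 - t + t ^ 2 := by
  linarith [sq_nonneg (t - 1 / 2)]

theorem one_add_cube_pos {t : ℝ} (ht : -1 < t) : 0 < 1 + t ^ 3 := by
  have hfactor : 1 + t ^ 3 = (1 + t) * (1 - t + t ^ 2) := by ring
  rw [hfactor]
  exact mul_pos (by linarith) (one_sub_add_sq_pos t)

/-- The angle occurring in the closed form, in terms of `t = (y / x) ^ (1 / 3)`. -/
noncomputable def angle (t : ℝ) : ℝ := arctan (√3 * t / (2 - t))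

theorem hasDerivAt_angle {t : ℝ} (ht : t < 2) :
    HasDerivAt angle (√3 / (2 * (1 - t + t ^ 2))) t := by
  have hpos := one_sub_add_sq_pos t
  have hne : 2 - t ≠ 0 := by linarith
  have hden : 1 + (√3 * t / (2 - t)) ^ 2 = 4 * (1 - t + t ^ 2) / (2 - t) ^ 2 := by
    rw [div_pow, mul_pow, sq_sqrt zero_le_three]
    field_simp
    ring
  refine ((((hasDerivAt_id t).const_mul √3).fun_div ((hasDerivAt_id t).const_sub 2)
    hne).arctan).congr_deriv ?_
  simp only [id, hden]
  field_simp
  ring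

theorem angle_add_arctan_one_div_sqrt_three {t : ℝ} (ht : t < 1) :
    angle t + arctan (1 / √3) = arctan ((1 + t) / (√3 * (1 - t))) := by
  have h2 : 0 < 2 - t := by linarith
  have h1 : 1 - t ≠ 0 := by linarith
  have hprod : √3 * t / (2 - t) * (1 / √3) = t / (2 - t) := by field_simp
  have hlt : t / (2 - t) < 1 := by rw [div_lt_one h2]; linarith
  have hden : 1 - t / (2 - t) = 2 * (1 - t) / (2 - t) := by field_simp; ring
  rw [angle, arctan_add (by rwa [hprod]), hprod, hden]
  congr 1
  field_simp
  rw [sq_sqrt zero_le_three]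
  ring

theorem angle_sub_arctan_one_div_sqrt_three {t : ℝ} (ht : t < 2) :
    angle t - arctan (1 / √3) = arctan ((2 * t - 1) / √3) := by
  have h2 : 0 < 2 - t := by linarith
  have hprod : √3 * t / (2 - t) * (-(1 / √3)) = -(t / (2 - t)) := by field_simp
  have hlt : -(t / (2 - t)) < 1 := by rw [neg_lt, lt_div_iff₀ h2]; linarith
  have hden : 1 - -(t / (2 - t)) = 2 / (2 - t) := by field_simp; ring
  rw [angle, sub_eq_add_neg, ← arctan_neg, arctan_add (by rwa [hprod]), hprod, hden]
  congr 1
  field_simp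
  rw [sq_sqrt zero_le_three]
  ring

theorem angle_add_arctan_div_sqrt_three {t : ℝ} (ht : t ∈ Ioo (-1) 1) :
    angle t + arctan ((2 * t - 1) / √3) =
      arctan ((6 * t - (1 + t) ^ 2) / (√3 * (1 - t ^ 2))) := by
  have hp : 0 < 1 + t := by linarith [ht.1]
  have hm : 0 < 1 - t := by linarith [ht.2]
  have h2 : 0 < 2 - t := by linarith
  have hprod : √3 * t / (2 - t) * ((2 * t - 1) / √3) = t * (2 * t - 1) / (2 - t) := by
    field_simp
  have hlt : t * (2 * t - 1) / (2 - t) < 1 := by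
    rw [div_lt_one h2]
    linarith [mul_pos hm hp]
  have hden : 1 - t * (2 * t - 1) / (2 - t) = 2 * (1 - t) * (1 + t) / (2 - t) := by
    field_simp
    ring
  rw [angle, arctan_add (by rwa [hprod]), hprod, hden, show 1 - t ^ 2 = (1 - t) * (1 + t) by ring]
  congr 1
  field_simp
  rw [sq_sqrt zero_le_three]
  ring

theorem arctan_add_arctan_eq_three_mul_angle {t : ℝ} (ht : t ∈ Ioo (-1) 1) :
    arctan ((6 * t - (1 + t) ^ 2) / (√3 * (1 - t ^ 2))) + arctan ((1 + t) / (√3 * (1 - t))) =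
      3 * angle t := by
  linarith [angle_add_arctan_one_div_sqrt_three ht.2, angle_add_arctan_div_sqrt_three ht,
    angle_sub_arctan_one_div_sqrt_three (ht.2.trans one_lt_two)]

/-- The right-hand side of the evaluation, in terms of `t = (y / x) ^ (1 / 3)`. -/
noncomputable def closedForm (t : ℝ) : ℝ :=
  6 * angle t ^ 2 - 1 / 2 * log ((1 + t ^ 3) / (1 + t) ^ 3) ^ 2

theorem hasDerivAt_log_one_add_cube_div {t : ℝ} (ht : -1 < t) :
    HasDerivAt (fun t : ℝ ↦ log ((1 + t ^ 3) / (1 + t) ^ 3)) (-(3 * (1 - t) / (1 + t ^ 3))) t := by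
  have hp : 0 < 1 + t := by linarith
  have hc : 0 < 1 + t ^ 3 := one_add_cube_pos ht
  have hnum : HasDerivAt (fun t : ℝ ↦ 1 + t ^ 3) (3 * t ^ 2) t := by
    simpa using (hasDerivAt_pow 3 t).const_add 1
  have hden : HasDerivAt (fun t : ℝ ↦ (1 + t) ^ 3) (3 * (1 + t) ^ 2) t := by
    simpa using ((hasDerivAt_id t).const_add 1).fun_pow 3
  refine ((hnum.fun_div hden (by positivity)).log (by positivity)).congr_deriv ?_
  field_simp
  ring

theorem hasDerivAt_closedForm {t : ℝ} (ht : t ∈ Ioo (-1) 2) :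
    HasDerivAt closedForm (6 * √3 * angle t / (1 - t + t ^ 2) +
      3 * (1 - t) / (1 + t ^ 3) * log ((1 + t ^ 3) / (1 + t) ^ 3)) t := by
  refine ((((hasDerivAt_angle ht.2).fun_pow 2).const_mul 6).fun_sub
    (((hasDerivAt_log_one_add_cube_div ht.1).fun_pow 2).const_mul (1 / 2))).congr_deriv ?_
  have := one_sub_add_sq_pos t
  have := one_add_cube_pos ht.1
  simp only [Nat.cast_ofNat, Nat.add_one_sub_one, pow_one]
  field_simp
  ring

end Parametrisation

section Integral

theorem hasDerivAt_arctan_sub_div (c v : ℝ) {d : ℝ} (hd : d ≠ 0) :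
    HasDerivAt (fun v ↦ arctan ((v - c) / d)) (d / ((v - c) ^ 2 + d ^ 2)) v := by
  refine ((((hasDerivAt_id v).sub_const c).div_const d).arctan).congr_deriv ?_
  have : 0 < (v - c) ^ 2 + d ^ 2 := by positivity
  have : 0 < d ^ 2 + (v - c) ^ 2 := by positivity
  simp only [id]
  field_simp
  ring

/-- A primitive of `(α + 2β) v / ((α + v) (v² - β v + α β))`, where `d² = α β - β² / 4`. -/
noncomputable def cubicPrimitive (α β d v : ℝ) : ℝ :=
  log (v ^ 2 - β * v + α * β) / 2 - log (α + v) + 3 * β / (2 * d) * arctan ((v - β / 2) / d)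

theorem hasDerivAt_cubicPrimitive {α β d v : ℝ} (hd : d ≠ 0) (hdsq : d ^ 2 = α * β - β ^ 2 / 4)
    (hv : α + v ≠ 0) :
    HasDerivAt (cubicPrimitive α β d)
      ((α + 2 * β) * v / ((α + v) * (v ^ 2 - β * v + α * β))) v := by
  have hsquare : (v - β / 2) ^ 2 + d ^ 2 = v ^ 2 - β * v + α * β := by rw [hdsq]; ring
  have hquad : v ^ 2 - β * v + α * β ≠ 0 := by rw [← hsquare]; positivity
  have hquad_deriv : HasDerivAt (fun v ↦ v ^ 2 - β * v + α * β) (2 * v - β) v := by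
    simpa using ((hasDerivAt_pow 2 v).fun_sub ((hasDerivAt_id v).const_mul β)).add_const (α * β)
  have harctan := hasDerivAt_arctan_sub_div (β / 2) v hd
  rw [hsquare] at harctan
  refine ((((hquad_deriv.log hquad).div_const 2).fun_sub
    (((hasDerivAt_id v).const_add α).log hv)).fun_add
    (harctan.const_mul (3 * β / (2 * d)))).congr_deriv ?_
  simp only [id]
  generalize hq : v ^ 2 - β * v + α * β = q at *
  field_simp
  rw [← hq]
  ring

theorem one_sub_cubicParam_mul {t : ℝ} (ht : 1 + t ^ 3 ≠ 0) (u : ℝ) :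
    1 - cubicParam t * (u ^ 2 * (1 - u)) =
      (1 - t + t ^ 2 + 3 * t * u) * ((3 * t * u) ^ 2 - (1 + t) ^ 2 * (3 * t * u) +
        (1 - t + t ^ 2) * (1 + t) ^ 2) / (1 + t ^ 3) ^ 2 := by
  rw [cubicParam]
  field_simp
  ring

theorem one_sub_cubicParam_mul_pos {t u : ℝ} (ht : t ∈ Ico 0 1) (hu : 0 ≤ u) :
    0 < 1 - cubicParam t * (u ^ 2 * (1 - u)) := by
  have := mul_le_mul_of_nonneg_left (sq_mul_one_sub_le hu) (cubicParam_nonneg ht.1)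
  linarith [cubicParam_lt ht]

/-- `cubicPrimitive` with the parameters for which, after the substitution `v = 3 t u`, it becomes a
primitive of a multiple of `u / (1 - cubicParam t * (u² (1 - u)))`. -/
noncomputable def paramPrimitive (t u : ℝ) : ℝ :=
  cubicPrimitive (1 - t + t ^ 2) ((1 + t) ^ 2) (√3 * (1 - t ^ 2) / 2) (3 * t * u)

theorem hasDerivAt_paramPrimitive {t u : ℝ} (ht : t ∈ Ico 0 1) (hu : 0 ≤ u) :
    HasDerivAt (paramPrimitive t)
      (27 * t ^ 2 * (1 + t + t ^ 2) / (1 + t ^ 3) ^ 2 *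
        (u / (1 - cubicParam t * (u ^ 2 * (1 - u))))) u := by
  have ht0 : 0 ≤ t := ht.1
  have hc : 1 + t ^ 3 ≠ 0 := by positivity
  have hα : 0 < 1 - t + t ^ 2 := one_sub_add_sq_pos t
  have hd : √3 * (1 - t ^ 2) / 2 ≠ 0 := by
    have : 0 < 1 - t ^ 2 := sub_pos.2 (pow_lt_one₀ ht0 ht.2 two_ne_zero)
    positivity
  have hdsq : (√3 * (1 - t ^ 2) / 2) ^ 2 =
      (1 - t + t ^ 2) * (1 + t) ^ 2 - ((1 + t) ^ 2) ^ 2 / 4 := by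
    rw [div_pow, mul_pow, sq_sqrt zero_le_three]
    ring
  have hlin : HasDerivAt (fun u ↦ 3 * t * u) (3 * t) u := by
    simpa using (hasDerivAt_id u).const_mul (3 * t)
  refine ((hasDerivAt_cubicPrimitive hd hdsq (by positivity)).comp u hlin).congr_deriv ?_
  rw [one_sub_cubicParam_mul hc]
  field_simp
  ring

theorem log_one_add_cube_div {t : ℝ} (ht : 0 < 1 + t) :
    log ((1 + t ^ 3) / (1 + t) ^ 3) = log (1 - t + t ^ 2) - 2 * log (1 + t) := by
  have hα : 0 < 1 - t + t ^ 2 := one_sub_add_sq_pos t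
  rw [show (1 + t ^ 3) / (1 + t) ^ 3 = (1 - t + t ^ 2) / (1 + t) ^ 2 by field_simp; ring,
    log_div hα.ne' (by positivity), log_pow, Nat.cast_ofNat]

theorem paramPrimitive_arctan_coeff {t : ℝ} (hp : 1 + t ≠ 0) (hm : 1 - t ≠ 0) :
    3 * (1 + t) ^ 2 / (2 * (√3 * (1 - t ^ 2) / 2)) = √3 * (1 + t) / (1 - t) := by
  rw [show 1 - t ^ 2 = (1 - t) * (1 + t) by ring]
  field_simp
  rw [sq_sqrt zero_le_three]

theorem paramPrimitive_one {t : ℝ} (hp : 1 + t ≠ 0) (hm : 1 - t ≠ 0) :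
    paramPrimitive t 1 = log (1 - t + t ^ 2) - 2 * log (1 + t) +
      √3 * (1 + t) / (1 - t) * arctan ((6 * t - (1 + t) ^ 2) / (√3 * (1 - t ^ 2))) := by
  have hquad : (3 * t * 1) ^ 2 - (1 + t) ^ 2 * (3 * t * 1) + (1 - t + t ^ 2) * (1 + t) ^ 2 =
      (1 - t + t ^ 2) ^ 2 := by ring
  have hlin : 1 - t + t ^ 2 + 3 * t * 1 = (1 + t) ^ 2 := by ring
  have harg : (3 * t * 1 - (1 + t) ^ 2 / 2) / (√3 * (1 - t ^ 2) / 2) =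
      (6 * t - (1 + t) ^ 2) / (√3 * (1 - t ^ 2)) := by field_simp; ring
  rw [paramPrimitive, cubicPrimitive, hquad, hlin, paramPrimitive_arctan_coeff hp hm, harg,
    log_pow, log_pow, Nat.cast_ofNat]
  ring

theorem paramPrimitive_zero {t : ℝ} (hp : 1 + t ≠ 0) (hm : 1 - t ≠ 0) :
    paramPrimitive t 0 = (2 * log (1 + t) - log (1 - t + t ^ 2)) / 2 -
      √3 * (1 + t) / (1 - t) * arctan ((1 + t) / (√3 * (1 - t))) := by
  have hquad : (3 * t * 0) ^ 2 - (1 + t) ^ 2 * (3 * t * 0) + (1 - t + t ^ 2) * (1 + t) ^ 2 =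
      (1 - t + t ^ 2) * (1 + t) ^ 2 := by ring
  have harg : (3 * t * 0 - (1 + t) ^ 2 / 2) / (√3 * (1 - t ^ 2) / 2) =
      -((1 + t) / (√3 * (1 - t))) := by
    rw [show 1 - t ^ 2 = (1 - t) * (1 + t) by ring]
    field_simp
    ring
  rw [paramPrimitive, cubicPrimitive, hquad, paramPrimitive_arctan_coeff hp hm, harg, arctan_neg,
    log_mul (one_sub_add_sq_pos t).ne' (by positivity), log_pow, mul_zero, add_zero,
    Nat.cast_ofNat]
  ring

theorem paramPrimitive_one_sub_zero {t : ℝ} (ht : t ∈ Ioo (-1) 1) :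
    paramPrimitive t 1 - paramPrimitive t 0 =
      3 / 2 * log ((1 + t ^ 3) / (1 + t) ^ 3) + 3 * √3 * (1 + t) / (1 - t) * angle t := by
  have hp : 0 < 1 + t := by linarith [ht.1]
  have hm : 1 - t ≠ 0 := by linarith [ht.2]
  rw [paramPrimitive_one hp.ne' hm, paramPrimitive_zero hp.ne' hm, log_one_add_cube_div hp]
  linear_combination (√3 * (1 + t) / (1 - t)) * arctan_add_arctan_eq_three_mul_angle ht

theorem integral_div_one_sub_cubicParam_mul {t : ℝ} (ht : t ∈ Ico 0 1) :
    27 * t ^ 2 * (1 + t + t ^ 2) / (1 + t ^ 3) ^ 2 *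
        ∫ u in (0 : ℝ)..1, u / (1 - cubicParam t * (u ^ 2 * (1 - u))) =
      3 / 2 * log ((1 + t ^ 3) / (1 + t) ^ 3) + 3 * √3 * (1 + t) / (1 - t) * angle t := by
  have hnonneg {u : ℝ} (hu : u ∈ uIcc 0 1) : 0 ≤ u := (uIcc_of_le (zero_le_one' ℝ) ▸ hu).1
  have hintegrable : IntervalIntegrable
      (fun u ↦ u / (1 - cubicParam t * (u ^ 2 * (1 - u)))) volume 0 1 :=
    (continuousOn_id.div (by fun_prop)
      fun u hu ↦ (one_sub_cubicParam_mul_pos ht (hnonneg hu)).ne').intervalIntegrable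
  rw [← intervalIntegral.integral_const_mul, intervalIntegral.integral_eq_sub_of_hasDerivAt
    (fun u hu ↦ hasDerivAt_paramPrimitive ht (hnonneg hu)) (hintegrable.const_mul _),
    paramPrimitive_one_sub_zero ⟨by linarith [ht.1], ht.2⟩]

end Integral

section Evaluation

theorem hasDerivAt_invChooseSeries_cubicParam {t : ℝ} (ht : t ∈ Ico 0 1) :
    HasDerivAt (fun t ↦ invChooseSeries (cubicParam t))
      (6 * √3 * angle t / (1 - t + t ^ 2) +
        3 * (1 - t) / (1 + t ^ 3) * log ((1 + t ^ 3) / (1 + t) ^ 3)) t := by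
  have hp : 0 < 1 + t := by linarith [ht.1]
  have hm : 0 < 1 - t := by linarith [ht.2]
  have hc : 0 < 1 + t ^ 3 := one_add_cube_pos (by linarith)
  refine ((hasDerivAt_invChooseSeries (abs_cubicParam_lt ht)).comp t
    (hasDerivAt_cubicParam hc.ne')).congr_deriv ?_
  have hintegral := integral_div_one_sub_cubicParam_mul ht
  simp only [mul_div_assoc, intervalIntegral.integral_const_mul]
  generalize ∫ u in (0 : ℝ)..1, u / (1 - cubicParam t * (u ^ 2 * (1 - u))) = I at *
  calc 2 / 3 * I * (81 * t ^ 2 * ((1 - t ^ 3) / (1 + t ^ 3) ^ 3))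
      = 2 * (1 - t) / (1 + t ^ 3) *
          (27 * t ^ 2 * (1 + t + t ^ 2) / (1 + t ^ 3) ^ 2 * I) := by
        field_simp
        ring
    _ = _ := by
        rw [hintegral, show 1 + t ^ 3 = (1 + t) * (1 - t + t ^ 2) by ring]
        field_simp
        ring

theorem invChooseSeries_cubicParam {t : ℝ} (ht : t ∈ Ico 0 1) :
    invChooseSeries (cubicParam t) = closedForm t := by
  have hmem {s : ℝ} (hs : s ∈ Icc 0 t) : s ∈ Ico 0 1 := ⟨hs.1, hs.2.trans_lt ht.2⟩
  have hseries {s : ℝ} (hs : s ∈ Icc 0 t) := hasDerivAt_invChooseSeries_cubicParam (hmem hs)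
  have hclosed {s : ℝ} (hs : s ∈ Icc 0 t) :=
    hasDerivAt_closedForm (t := s) ⟨by linarith [hs.1], by linarith [(hmem hs).2]⟩
  refine eq_of_has_deriv_right_eq
    (fun s hs ↦ (hseries (Ico_subset_Icc_self hs)).hasDerivWithinAt)
    (fun s hs ↦ (hclosed (Ico_subset_Icc_self hs)).hasDerivWithinAt)
    (fun s hs ↦ (hseries hs).continuousAt.continuousWithinAt)
    (fun s hs ↦ (hclosed hs).continuousAt.continuousWithinAt) ?_ t (right_mem_Icc.2 ht.1)
  simp [invChooseSeries, cubicParam, closedForm, angle]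

theorem hasSum_closedForm {t : ℝ} (ht : t ∈ Icc 0 1) :
    HasSum (fun k : ℕ ↦ derivCoeff k / (k + 1) * cubicParam t ^ (k + 1)) (closedForm t) := by
  have hlt {s : ℝ} (hs : s ∈ Ico 0 1) :
      HasSum (fun k : ℕ ↦ derivCoeff k / (k + 1) * cubicParam s ^ (k + 1)) (closedForm s) :=
    invChooseSeries_cubicParam hs ▸ hasSum_invChooseSeries (abs_cubicParam_lt hs)
  obtain h1 | rfl := ht.2.lt_or_eq
  · exact hlt ⟨ht.1, h1⟩
  have hcoeff (k : ℕ) : 0 ≤ derivCoeff k / (k + 1) :=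
    div_nonneg (derivCoeff_nonneg k) k.cast_add_one_pos.le
  have hnear : ∀ᶠ s : ℝ in 𝓝[<] 1, s ∈ Ico 0 1 := Ico_mem_nhdsLT one_pos
  have hparam : ContinuousAt cubicParam 1 := (hasDerivAt_cubicParam (by norm_num)).continuousAt
  have hclosed : ContinuousAt closedForm 1 := (hasDerivAt_closedForm (by norm_num)).continuousAt
  refine hasSum_of_tendsto_of_le
    (fun k ↦ ((hparam.tendsto.mono_left nhdsWithin_le_nhds).pow (k + 1)).const_mul _)
    (hnear.mono fun s hs k ↦ mul_nonneg (hcoeff k) (pow_nonneg (cubicParam_nonneg hs.1) _))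
    (hnear.mono fun s hs k ↦ ?_) (hnear.mono fun s hs ↦ hlt hs)
    (hclosed.tendsto.mono_left nhdsWithin_le_nhds)
  have := cubicParam_nonneg hs.1
  have := hcoeff k
  gcongr
  rw [cubicParam_one]
  exact (cubicParam_lt hs).le

theorem cubicParam_div {a b : ℝ} (ha : a ≠ 0) :
    cubicParam (b / a) = 27 * a ^ 3 * b ^ 3 / (a ^ 3 + b ^ 3) ^ 2 := by
  unfold cubicParam
  field_simp

theorem closedForm_div {a b : ℝ} (ha : a ≠ 0) :
    closedForm (b / a) = 6 * arctan (√3 * b / (2 * a - b)) ^ 2 -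
      1 / 2 * log ((a ^ 3 + b ^ 3) / (a + b) ^ 3) ^ 2 := by
  have hangle : √3 * (b / a) / (2 - b / a) = √3 * b / (2 * a - b) := by field_simp
  have hlog : (1 + (b / a) ^ 3) / (1 + b / a) ^ 3 = (a ^ 3 + b ^ 3) / (a + b) ^ 3 := by field_simp
  rw [closedForm, angle, hangle, hlog]

end Evaluation

theorem stmt_0 (x y : ℝ) (hy : 0 < y) (hxy : 1 ≤ x / y) :
    ∑' k : ℕ, (27*x*y)^(k+1) /
      (((k:ℝ)+1)^2 * (x+y)^(2*(k+1)) * (((3*(k+1)).choose (k+1) : ℕ) : ℝ)) =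
    6 * (Real.arctan (Real.sqrt 3 * y ^ ((1:ℝ)/3) / (2 * x ^ ((1:ℝ)/3) - y ^ ((1:ℝ)/3))))^2
      - (1/2) * (Real.log ((x+y) / (x ^ ((1:ℝ)/3) + y ^ ((1:ℝ)/3))^3))^2 := by
  have hyx : y ≤ x := (one_le_div hy).1 hxy
  have hx : 0 < x := hy.trans_le hyx
  have ha := rpow_pos_of_pos hx ((1 : ℝ) / 3)
  have ht : y ^ ((1 : ℝ) / 3) / x ^ ((1 : ℝ) / 3) ∈ Icc 0 1 :=
    ⟨by positivity, (div_le_one ha).2 (by gcongr)⟩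
  have hparam := cubicParam_div (b := y ^ ((1 : ℝ) / 3)) ha.ne'
  have hclosed := closedForm_div (b := y ^ ((1 : ℝ) / 3)) ha.ne'
  have hx_cube : (x ^ ((1 : ℝ) / 3)) ^ 3 = x := by
    simpa using rpow_inv_natCast_pow hx.le three_ne_zero
  have hy_cube : (y ^ ((1 : ℝ) / 3)) ^ 3 = y := by
    simpa using rpow_inv_natCast_pow hy.le three_ne_zero
  rw [hx_cube, hy_cube] at hparam hclosed
  rw [← hclosed, ← (hasSum_closedForm ht).tsum_eq, hparam]
  refine tsum_congr fun k ↦ ?_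
  rw [derivCoeff, div_pow, ← pow_mul]
  field_simp
end

section
/- ∑_{k=1}^∞ (8/3)^k / (k² · C(3k,k)) = π²/6 − (1/2)·(log 3)². -/
open Real

/-!
By the Beta integral the `k`-th term is `∫₀¹ z ^ k x ^ (k - 1) (1 - x) ^ (2 * k) / k` at
`z = 8 / 3`, so the sum is `∫₀¹ -log (1 - z x (1 - x) ^ 2) / x`. At this `z` the cubic factors as
`1 - 8 / 3 x (1 - x) ^ 2 = (1 - 2 / 3 x) (1 + 8 x ^ 3) / (1 + 2 x)`, and since
`∫₀¹ -log (1 - a x ^ n) / x = Li₂(a) / n`, the integral is `Li₂(2/3) + Li₂(-8) / 3 - Li₂(-2)`.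
Landen's identity, the reflection formula and the duplication formula reduce this combination to
the classical evaluation of `Li₂(-1/3) - Li₂(1/9) / 3`.
-/

open Filter MeasureTheory Set
open scoped Topology

section OrderedField

variable {K : Type*} [Field K] [LinearOrder K] [IsStrictOrderedRing K]

theorem mul_pow_lt_one {a x : K} (n : ℕ) (ha : a < 1) (hx : x ∈ Icc 0 1) :
    a * x ^ n < 1 := by
  rcases le_total a 0 with ha₀ | ha₀
  · exact (mul_nonpos_of_nonpos_of_nonneg ha₀ (pow_nonneg hx.1 n)).trans_lt one_pos
  · exact (mul_le_of_le_one_right ha₀ (pow_le_one₀ hx.1 hx.2)).trans_lt ha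

theorem pow_mul_add_one_sub_mul_le_one (m : ℕ) {t : K} (ht : 0 ≤ t) :
    t ^ m * (m + 1 - m * t) ≤ 1 := by
  induction m with
  | zero => simp
  | succ m ih =>
    have hstep : t ^ (m + 1) * ((m + 1 : ℕ) + 1 - (m + 1 : ℕ) * t) =
        t ^ m * (m + 1 - m * t) - t ^ m * (m + 1) * (t - 1) ^ 2 := by
      push_cast
      ring
    have hnonneg : 0 ≤ t ^ m * (m + 1) * (t - 1) ^ 2 := by positivity
    linarith

theorem mul_one_sub_pow_le (m : ℕ) {x : K} (hx : x ≤ 1) :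
    x * (1 - x) ^ m ≤ (m : K) ^ m / (m + 1) ^ (m + 1) := by
  rcases eq_or_ne m 0 with rfl | hm
  · simpa using hx
  have hm' : (m : K) ≠ 0 := by exact_mod_cast hm
  have hle := pow_mul_add_one_sub_mul_le_one m (t := (m + 1) * (1 - x) / m)
    (div_nonneg (mul_nonneg (by positivity) (sub_nonneg.2 hx)) m.cast_nonneg)
  have hlin : (m + 1 - m * ((m + 1) * (1 - x) / m) : K) = (m + 1) * x := by
    field_simp
    ring
  rw [hlin, div_pow, mul_pow, div_mul_eq_mul_div, div_le_one (by positivity)] at hle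
  rw [le_div_iff₀ (by positivity)]
  linarith [show x * (1 - x) ^ m * (m + 1 : K) ^ (m + 1) =
    (m + 1) ^ m * (1 - x) ^ m * ((m + 1) * x) by ring]

end OrderedField

theorem one_sub_div_sub_one {K : Type*} [Field K] {x : K} (hx : x ≠ 1) :
    1 - x / (x - 1) = (1 - x)⁻¹ := by
  have h₁ : x - 1 ≠ 0 := sub_ne_zero.2 hx
  have h₂ : 1 - x ≠ 0 := sub_ne_zero.2 hx.symm
  field_simp
  ring

theorem eq_of_hasDerivAt_zero {𝕜 G : Type*} [RCLike 𝕜] [NormedAddCommGroup G] [NormedSpace 𝕜 G]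
    {f : 𝕜 → G} {s : Set 𝕜} (hs : IsOpen s) (hs' : IsPreconnected s)
    (hf : ∀ x ∈ s, HasDerivAt f 0 x) {x y : 𝕜} (hx : x ∈ s) (hy : y ∈ s) : f x = f y :=
  hs.is_const_of_deriv_eq_zero hs' (fun z hz => (hf z hz).differentiableAt.differentiableWithinAt)
    (fun z hz => (hf z hz).deriv) hx hy

section InverseBinomialSeries

theorem integral_pow_mul_one_sub_pow_s2 (a b : ℕ) :
    ∫ x in (0 : ℝ)..1, x ^ a * (1 - x) ^ b =
      (a.factorial : ℝ) * b.factorial / (a + b + 1).factorial := by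
  have hGamma := Complex.betaIntegral_eq_Gamma_mul_div (a + 1) (b + 1)
    (by simpa using a.cast_add_one_pos) (by simpa using b.cast_add_one_pos)
  rw [show (a + 1 + (b + 1) : ℂ) = ((a + b + 1 : ℕ) : ℂ) + 1 by push_cast; ring] at hGamma
  simp only [Complex.Gamma_nat_eq_factorial, Complex.betaIntegral, add_sub_cancel_right,
    Complex.cpow_natCast] at hGamma
  rw [← Complex.ofReal_inj, ← intervalIntegral.integral_ofReal]
  push_cast
  exact hGamma

theorem integral_div_mul_pow_mul_one_sub_pow (m k : ℕ) (z : ℝ) :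
    ∫ x in (0 : ℝ)..1, z ^ (k + 1) / (k + 1) * (x ^ k * (1 - x) ^ (m * (k + 1))) =
      z ^ (k + 1) / (((k : ℝ) + 1) ^ 2 * (((m + 1) * (k + 1)).choose (k + 1) : ℕ)) := by
  have hsum : (m + 1) * (k + 1) = k + 1 + m * (k + 1) := by ring
  rw [intervalIntegral.integral_const_mul, integral_pow_mul_one_sub_pow_s2, hsum,
    Nat.cast_add_choose, Nat.factorial_succ k, add_right_comm k 1]
  push_cast
  field_simp

theorem norm_div_mul_pow_mul_one_sub_pow_le (m k : ℕ) (z : ℝ) {x : ℝ} (hx₀ : 0 ≤ x) (hx₁ : x ≤ 1) :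
    ‖z ^ (k + 1) / (k + 1) * (x ^ k * (1 - x) ^ (m * (k + 1)))‖ ≤
      |z| * (|z| * ((m : ℝ) ^ m / (m + 1) ^ (m + 1))) ^ k := by
  have hx : 0 ≤ 1 - x := sub_nonneg.2 hx₁
  have hfactor : (1 - x) ^ m / (k + 1 : ℝ) ≤ 1 :=
    div_le_one_of_le₀ ((pow_le_one₀ hx (by linarith)).trans (by simp)) (by positivity)
  calc ‖z ^ (k + 1) / (k + 1) * (x ^ k * (1 - x) ^ (m * (k + 1)))‖
      = |z| * (|z| * (x * (1 - x) ^ m)) ^ k * ((1 - x) ^ m / (k + 1)) := by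
        rw [norm_mul, norm_div, norm_pow, norm_eq_abs z,
          norm_of_nonneg (by positivity : (0 : ℝ) ≤ k + 1), norm_of_nonneg (by positivity)]
        ring
    _ ≤ |z| * (|z| * (x * (1 - x) ^ m)) ^ k := mul_le_of_le_one_right (by positivity) hfactor
    _ ≤ |z| * (|z| * ((m : ℝ) ^ m / (m + 1) ^ (m + 1))) ^ k := by
        gcongr
        exact mul_one_sub_pow_le m hx₁

theorem hasSum_div_mul_pow_mul_one_sub_pow {m : ℕ} {z x : ℝ} (hx : x ≠ 0)
    (hz : |z * (x * (1 - x) ^ m)| < 1) :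
    HasSum (fun k : ℕ => z ^ (k + 1) / (k + 1) * (x ^ k * (1 - x) ^ (m * (k + 1))))
      (-log (1 - z * (x * (1 - x) ^ m)) / x) := by
  refine ((hasSum_pow_div_log_of_abs_lt_one hz).div_const x).congr_fun fun k => ?_
  field_simp
  ring

theorem hasSum_pow_div_sq_mul_choose {m : ℕ} {z : ℝ} (hz : |z| * m ^ m < (m + 1) ^ (m + 1)) :
    HasSum
      (fun k : ℕ => z ^ (k + 1) / (((k : ℝ) + 1) ^ 2 * (((m + 1) * (k + 1)).choose (k + 1) : ℕ)))
      (∫ x in (0 : ℝ)..1, -log (1 - z * (x * (1 - x) ^ m)) / x) := by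
  have hratio : |z| * ((m : ℝ) ^ m / (m + 1) ^ (m + 1)) < 1 := by
    rwa [← mul_div_assoc, div_lt_one (by positivity)]
  simp_rw [← integral_div_mul_pow_mul_one_sub_pow]
  refine intervalIntegral.hasSum_integral_of_dominated_convergence
    (fun k _ => |z| * (|z| * ((m : ℝ) ^ m / (m + 1) ^ (m + 1))) ^ k)
    (fun k => Continuous.aestronglyMeasurable (by fun_prop)) (fun k => .of_forall fun x hx => ?_)
    (.of_forall fun x _ => (summable_geometric_of_lt_one (by positivity) hratio).mul_left _)
    intervalIntegrable_const (.of_forall fun x hx => ?_)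
  all_goals rw [uIoc_of_le zero_le_one] at hx
  · exact norm_div_mul_pow_mul_one_sub_pow_le m k z hx.1.le hx.2
  · refine hasSum_div_mul_pow_mul_one_sub_pow hx.1.ne' ?_
    have hnonneg : 0 ≤ x * (1 - x) ^ m := mul_nonneg hx.1.le (pow_nonneg (sub_nonneg.2 hx.2) m)
    rw [abs_mul, abs_of_nonneg hnonneg]
    exact (mul_le_mul_of_nonneg_left (mul_one_sub_pow_le m hx.2) (abs_nonneg z)).trans_lt hratio

end InverseBinomialSeries

section Dilog

/-- The real dilogarithm `Li₂(x) = ∫₀ˣ -log (1 - t) / t dt`, meant for `x ≤ 1`. -/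
noncomputable def dilog (x : ℝ) : ℝ := ∫ t in (0 : ℝ)..x, -log (1 - t) / t

/-- The derivative `-log (1 - x) / x` of the dilogarithm on `x < 1`, with its singularity at `0`
removed by taking a divided slope. -/
noncomputable def dilogDeriv : ℝ → ℝ := dslope (fun t => -log (1 - t)) 0

theorem dilog_zero : dilog 0 = 0 := intervalIntegral.integral_same

theorem hasDerivAt_neg_log_one_sub {x : ℝ} (hx : x < 1) :
    HasDerivAt (fun t => -log (1 - t)) (1 - x)⁻¹ x := by
  refine (((hasDerivAt_id' x).const_sub 1).log (sub_pos.2 hx).ne').fun_neg.congr_deriv ?_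
  rw [neg_div, neg_neg, one_div]

theorem dilogDeriv_zero : dilogDeriv 0 = 1 := by
  rw [dilogDeriv, dslope_same, (hasDerivAt_neg_log_one_sub one_pos).deriv, sub_zero, inv_one]

theorem mul_dilogDeriv (x : ℝ) : x * dilogDeriv x = -log (1 - x) := by
  simpa [dilogDeriv] using sub_smul_dslope (fun t => -log (1 - t)) 0 x

theorem dilogDeriv_of_ne {x : ℝ} (hx : x ≠ 0) : dilogDeriv x = -log (1 - x) / x := by
  rw [eq_div_iff hx, mul_comm, mul_dilogDeriv]

theorem continuousOn_dilogDeriv : ContinuousOn dilogDeriv (Iio 1) :=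
  (continuousOn_dslope (Iio_mem_nhds one_pos)).2
    ⟨fun _ hx => (hasDerivAt_neg_log_one_sub hx).continuousAt.continuousWithinAt,
      (hasDerivAt_neg_log_one_sub one_pos).differentiableAt⟩

theorem dilog_eq_integral_dilogDeriv (x : ℝ) : dilog x = ∫ t in (0 : ℝ)..x, dilogDeriv t := by
  refine intervalIntegral.integral_congr_ae ?_
  filter_upwards [volume.ae_ne (0 : ℝ)] with t ht _
  rw [dilogDeriv_of_ne ht]

theorem hasDerivAt_dilog {x : ℝ} (hx : x < 1) : HasDerivAt dilog (dilogDeriv x) x := by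
  rw [funext dilog_eq_integral_dilogDeriv]
  have hsub : uIcc 0 x ⊆ Iio 1 := ordConnected_Iio.uIcc_subset one_pos hx
  exact intervalIntegral.integral_hasDerivAt_right
    (continuousOn_dilogDeriv.mono hsub).intervalIntegrable
    (continuousOn_dilogDeriv.stronglyMeasurableAtFilter isOpen_Iio x hx)
    (continuousOn_dilogDeriv.continuousAt (Iio_mem_nhds hx))

theorem neg_log_one_sub_mul_pow_div (a : ℝ) (n : ℕ) {x : ℝ} (hx : x ≠ 0) :
    -log (1 - a * x ^ (n + 1)) / x = a * x ^ n * dilogDeriv (a * x ^ (n + 1)) := by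
  rw [← mul_dilogDeriv]
  field_simp
  ring

theorem intervalIntegrable_mul_pow_mul_dilogDeriv {a : ℝ} (ha : a < 1) (n : ℕ) :
    IntervalIntegrable (fun x => a * x ^ n * dilogDeriv (a * x ^ (n + 1))) volume 0 1 := by
  refine ContinuousOn.intervalIntegrable (ContinuousOn.mul (by fun_prop) ?_)
  rw [uIcc_of_le zero_le_one]
  exact continuousOn_dilogDeriv.comp (by fun_prop) fun x hx => mul_pow_lt_one _ ha hx

theorem intervalIntegrable_neg_log_one_sub_mul_pow_div {a : ℝ} (ha : a < 1) {n : ℕ} (hn : n ≠ 0) :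
    IntervalIntegrable (fun x => -log (1 - a * x ^ n) / x) volume 0 1 := by
  obtain ⟨n, rfl⟩ := Nat.exists_eq_succ_of_ne_zero hn
  refine (intervalIntegrable_mul_pow_mul_dilogDeriv ha n).congr_uIoo fun x hx => ?_
  rw [uIoo_of_le zero_le_one] at hx
  exact (neg_log_one_sub_mul_pow_div a n hx.1.ne').symm

theorem integral_neg_log_one_sub_mul_pow_div {a : ℝ} (ha : a < 1) {n : ℕ} (hn : n ≠ 0) :
    ∫ x in (0 : ℝ)..1, -log (1 - a * x ^ n) / x = dilog a / n := by
  obtain ⟨n, rfl⟩ := Nat.exists_eq_succ_of_ne_zero hn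
  have hderiv : ∀ x ∈ uIcc (0 : ℝ) 1,
      HasDerivAt (fun x => dilog (a * x ^ (n + 1)) / (n + 1 : ℕ))
        (a * x ^ n * dilogDeriv (a * x ^ (n + 1))) x := by
    intro x hx
    rw [uIcc_of_le zero_le_one] at hx
    have hinner := (hasDerivAt_pow (n + 1) x).const_mul a
    refine (((hasDerivAt_dilog (mul_pow_lt_one (n + 1) ha hx)).comp x hinner).div_const
      ((n + 1 : ℕ) : ℝ)).congr_deriv ?_
    rw [Nat.add_sub_cancel]
    field_simp
  calc ∫ x in (0 : ℝ)..1, -log (1 - a * x ^ (n + 1)) / x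
      = ∫ x in (0 : ℝ)..1, a * x ^ n * dilogDeriv (a * x ^ (n + 1)) :=
        intervalIntegral.integral_congr_Ioo_of_le zero_le_one fun x hx =>
          neg_log_one_sub_mul_pow_div a n hx.1.ne'
    _ = dilog (a * 1 ^ (n + 1)) / (n + 1 : ℕ) - dilog (a * 0 ^ (n + 1)) / (n + 1 : ℕ) :=
        intervalIntegral.integral_eq_sub_of_hasDerivAt hderiv
          (intervalIntegrable_mul_pow_mul_dilogDeriv ha n)
    _ = dilog a / (n + 1 : ℕ) := by simp [dilog_zero]

theorem hasSum_dilog {x : ℝ} (hx : |x| < 1) :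
    HasSum (fun n : ℕ => 1 / (n : ℝ) ^ 2 * x ^ n) (dilog x) := by
  have hintegral : ∫ t in (0 : ℝ)..1, -log (1 - x * (t * (1 - t) ^ 0)) / t = dilog x := by
    simpa only [pow_zero, pow_one, mul_one, Nat.cast_one, div_one] using
      integral_neg_log_one_sub_mul_pow_div (abs_lt.1 hx).2 one_ne_zero
  have hshift := hasSum_pow_div_sq_mul_choose (m := 0) (z := x) (by simpa using hx)
  rw [hintegral] at hshift
  rw [← hasSum_nat_add_iff' 1]
  simpa [div_eq_inv_mul] using hshift

theorem tendsto_dilog_one : Tendsto dilog (𝓝[<] 1) (𝓝 (π ^ 2 / 6)) := by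
  refine (tendsto_tsum_powerSeries_nhdsWithin_lt hasSum_zeta_two.tendsto_sum_nat).congr' ?_
  filter_upwards [Ioo_mem_nhdsLT (show (-1 : ℝ) < 1 by norm_num)] with x hx
  exact (hasSum_dilog (abs_lt.2 hx)).tsum_eq

theorem dilog_sq {x : ℝ} (hx : |x| < 1) : dilog (x ^ 2) = 2 * (dilog x + dilog (-x)) := by
  obtain ⟨hneg, hpos⟩ := abs_lt.1 hx
  have hneg' : -x < 1 := by linarith
  have hfactor : EqOn (fun t => -log (1 - x ^ 2 * t ^ 2) / t)
      (fun t => -log (1 - x * t ^ 1) / t + -log (1 - -x * t ^ 1) / t) (Ioo 0 1) := by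
    intro t ht
    have h₁ := mul_pow_lt_one 1 hpos (Ioo_subset_Icc_self ht)
    have h₂ := mul_pow_lt_one 1 hneg' (Ioo_subset_Icc_self ht)
    have hmul : 1 - x ^ 2 * t ^ 2 = (1 - x * t ^ 1) * (1 - -x * t ^ 1) := by ring
    simp only [hmul, log_mul (sub_pos.2 h₁).ne' (sub_pos.2 h₂).ne']
    ring
  have hintegral := intervalIntegral.integral_congr_Ioo_of_le (μ := volume) zero_le_one hfactor
  rw [intervalIntegral.integral_add
      (intervalIntegrable_neg_log_one_sub_mul_pow_div hpos one_ne_zero)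
      (intervalIntegrable_neg_log_one_sub_mul_pow_div hneg' one_ne_zero),
    integral_neg_log_one_sub_mul_pow_div hpos one_ne_zero,
    integral_neg_log_one_sub_mul_pow_div hneg' one_ne_zero,
    integral_neg_log_one_sub_mul_pow_div ((sq_lt_one_iff_abs_lt_one x).2 hx) two_ne_zero]
    at hintegral
  push_cast at hintegral
  linarith

theorem dilogDeriv_div_sub_one {x : ℝ} (hx : x ≠ 1) :
    dilogDeriv (x / (x - 1)) = (1 - x) * dilogDeriv x := by
  have h₁ : x - 1 ≠ 0 := sub_ne_zero.2 hx
  rcases eq_or_ne x 0 with rfl | h₀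
  · simp
  · rw [dilogDeriv_of_ne h₀, dilogDeriv_of_ne (div_ne_zero h₀ h₁), one_sub_div_sub_one hx, log_inv]
    field_simp
    ring

theorem dilog_add_dilog_div_sub_one {x : ℝ} (hx : x < 1) :
    dilog x + dilog (x / (x - 1)) = -(1 / 2) * log (1 - x) ^ 2 := by
  have hderiv : ∀ y ∈ Iio (1 : ℝ), HasDerivAt
      (fun y => dilog y + dilog (y / (y - 1)) + 1 / 2 * (-log (1 - y)) ^ 2) 0 y := by
    intro y (hy : y < 1)
    have hne : y - 1 ≠ 0 := (sub_neg.2 hy).ne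
    have hne' : 1 - y ≠ 0 := (sub_pos.2 hy).ne'
    have hlt : y / (y - 1) < 1 := by
      rw [← sub_pos, one_sub_div_sub_one hy.ne]
      exact inv_pos.2 (sub_pos.2 hy)
    have hinner := (hasDerivAt_id' y).fun_div ((hasDerivAt_id' y).sub_const 1) hne
    refine (((hasDerivAt_dilog hy).add ((hasDerivAt_dilog hlt).comp y hinner)).add
      (((hasDerivAt_neg_log_one_sub hy).pow 2).const_mul (1 / 2))).congr_deriv ?_
    rw [dilogDeriv_div_sub_one hy.ne, ← mul_dilogDeriv]
    push_cast
    field_simp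
    ring
  have hconst := eq_of_hasDerivAt_zero isOpen_Iio isPreconnected_Iio hderiv hx (mem_Iio.2 one_pos)
  simp only [zero_div, sub_zero, log_one, dilog_zero] at hconst
  linarith

theorem hasDerivAt_dilog_add_dilog_one_sub {x : ℝ} (hx : x ∈ Ioo (0 : ℝ) 1) :
    HasDerivAt (fun y => dilog y + dilog (1 - y) - log y * -log (1 - y)) 0 x := by
  have hne : 1 - x ≠ 0 := (sub_pos.2 hx.2).ne'
  have houter := hasDerivAt_dilog (sub_lt_self 1 hx.1)
  refine (((hasDerivAt_dilog hx.2).add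
    (houter.comp x ((hasDerivAt_id' x).const_sub 1))).sub
    ((hasDerivAt_log hx.1.ne').mul (hasDerivAt_neg_log_one_sub hx.2))).congr_deriv ?_
  rw [dilogDeriv_of_ne hx.1.ne', dilogDeriv_of_ne hne, sub_sub_cancel]
  field_simp
  ring

theorem tendsto_log_mul_log_one_sub :
    Tendsto (fun x : ℝ => log x * -log (1 - x)) (𝓝 0) (𝓝 0) := by
  have hcont : ContinuousAt dilogDeriv 0 :=
    continuousOn_dilogDeriv.continuousAt (Iio_mem_nhds one_pos)
  have hlim := (continuous_mul_log.tendsto 0).mul hcont.tendsto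
  rw [zero_mul, zero_mul] at hlim
  refine hlim.congr fun x => ?_
  rw [← mul_dilogDeriv]
  ring

theorem dilog_add_dilog_one_sub {x : ℝ} (hx : x ∈ Ioo (0 : ℝ) 1) :
    dilog x + dilog (1 - x) = π ^ 2 / 6 - log x * log (1 - x) := by
  have hdilog : Tendsto dilog (𝓝[>] 0) (𝓝 0) := by
    simpa [dilog_zero] using (hasDerivAt_dilog one_pos).continuousAt.tendsto.mono_left
      (nhdsWithin_le_nhds (s := Ioi (0 : ℝ)))
  have hone_sub : Tendsto (fun y : ℝ => 1 - y) (𝓝[>] 0) (𝓝[<] 1) := by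
    refine tendsto_nhdsWithin_iff.2 ⟨?_, ?_⟩
    · exact ((continuous_const.sub continuous_id).tendsto' 0 1 (sub_zero 1)).mono_left
        nhdsWithin_le_nhds
    · filter_upwards [self_mem_nhdsWithin] with y (hy : 0 < y) using sub_lt_self (1 : ℝ) hy
  have hlim := (hdilog.add (tendsto_dilog_one.comp hone_sub)).sub
    (tendsto_log_mul_log_one_sub.mono_left nhdsWithin_le_nhds)
  have hconst : (fun y => dilog y + dilog (1 - y) - log y * -log (1 - y)) =ᶠ[𝓝[>] 0]
      fun _ => dilog x + dilog (1 - x) - log x * -log (1 - x) := by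
    filter_upwards [Ioo_mem_nhdsGT one_pos] with y hy
    exact eq_of_hasDerivAt_zero isOpen_Ioo isPreconnected_Ioo
      (fun z => hasDerivAt_dilog_add_dilog_one_sub) hy hx
  have hvalue := tendsto_nhds_unique (tendsto_const_nhds.congr' hconst.symm) hlim
  linarith

end Dilog

section SpecialValues

theorem dilog_one_half : dilog (1 / 2) = π ^ 2 / 12 - log 2 ^ 2 / 2 := by
  have hreflection := dilog_add_dilog_one_sub (x := 1 / 2) (by norm_num)
  have hlog : log (1 / 2) = -log 2 := by rw [one_div, log_inv]
  norm_num only [hlog] at hreflection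
  linarith

theorem dilog_neg_one_third_sub_dilog_one_ninth :
    dilog (-(1 / 3)) - dilog (1 / 9) / 3 = -π ^ 2 / 18 + log 3 ^ 2 / 6 := by
  have hlanden_third := dilog_add_dilog_div_sub_one (x := -(1 / 3)) (by norm_num)
  have hlanden_half := dilog_add_dilog_div_sub_one (x := -(1 / 2)) (by norm_num)
  have hsq_half := dilog_sq (x := 1 / 2) (by norm_num [abs_lt])
  have hsq_third := dilog_sq (x := 1 / 3) (by norm_num [abs_lt])
  have hlog_four_thirds : log (4 / 3) = 2 * log 2 - log 3 := by
    rw [log_div (by norm_num) (by norm_num), show (4 : ℝ) = 2 ^ 2 by norm_num, log_pow,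
      Nat.cast_two]
  have hlog_three_halves : log (3 / 2) = log 3 - log 2 := log_div (by norm_num) (by norm_num)
  norm_num only [hlog_four_thirds, hlog_three_halves, dilog_one_half]
    at hlanden_third hlanden_half hsq_half hsq_third
  linarith

theorem dilog_two_thirds_add_dilog_neg_eight_sub_dilog_neg_two :
    dilog (2 / 3) + dilog (-8) / 3 - dilog (-2) = π ^ 2 / 6 - 1 / 2 * log 3 ^ 2 := by
  have hlanden_two := dilog_add_dilog_div_sub_one (x := -2) (by norm_num)
  have hlanden_eight := dilog_add_dilog_div_sub_one (x := -8) (by norm_num)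
  have hreflection_third := dilog_add_dilog_one_sub (x := 1 / 3) (by norm_num)
  have hreflection_ninth := dilog_add_dilog_one_sub (x := 1 / 9) (by norm_num)
  have hsq_third := dilog_sq (x := 1 / 3) (by norm_num [abs_lt])
  have hladder := dilog_neg_one_third_sub_dilog_one_ninth
  have hlog_nine : log 9 = 2 * log 3 := by
    rw [show (9 : ℝ) = 3 ^ 2 by norm_num, log_pow, Nat.cast_two]
  have hlog_ninth : log (1 / 9) = -(2 * log 3) := by rw [one_div, log_inv, hlog_nine]
  have hlog_third : log (1 / 3) = -log 3 := by rw [one_div, log_inv]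
  have hlog_two_thirds : log (2 / 3) = log 2 - log 3 := log_div (by norm_num) (by norm_num)
  have hlog_eight_ninths : log (8 / 9) = 3 * log 2 - 2 * log 3 := by
    rw [log_div (by norm_num) (by norm_num), hlog_nine, show (8 : ℝ) = 2 ^ 3 by norm_num, log_pow,
      Nat.cast_ofNat]
  norm_num only [hlog_nine, hlog_ninth, hlog_third, hlog_two_thirds, hlog_eight_ninths]
    at hlanden_two hlanden_eight hreflection_third hreflection_ninth hsq_third hladder
  linarith

theorem integral_neg_log_one_sub_eight_thirds_mul_div :
    ∫ x in (0 : ℝ)..1, -log (1 - 8 / 3 * (x * (1 - x) ^ 2)) / x =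
      dilog (2 / 3) + dilog (-8) / 3 - dilog (-2) := by
  have h₁ : (2 / 3 : ℝ) < 1 := by norm_num
  have h₂ : (-8 : ℝ) < 1 := by norm_num
  have h₃ : (-2 : ℝ) < 1 := by norm_num
  have hfactor : EqOn (fun x : ℝ => -log (1 - 8 / 3 * (x * (1 - x) ^ 2)) / x)
      (fun x => -log (1 - 2 / 3 * x ^ 1) / x + -log (1 - -8 * x ^ 3) / x -
        -log (1 - -2 * x ^ 1) / x) (Ioo 0 1) := by
    intro x hx
    have hx' := Ioo_subset_Icc_self hx
    have hpos₁ := sub_pos.2 (mul_pow_lt_one 1 h₁ hx')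
    have hpos₂ := sub_pos.2 (mul_pow_lt_one 3 h₂ hx')
    have hpos₃ := sub_pos.2 (mul_pow_lt_one 1 h₃ hx')
    have hquot : 1 - 8 / 3 * (x * (1 - x) ^ 2) =
        (1 - 2 / 3 * x ^ 1) * (1 - -8 * x ^ 3) / (1 - -2 * x ^ 1) := by
      rw [eq_div_iff hpos₃.ne']
      ring
    simp only [hquot, log_div (mul_pos hpos₁ hpos₂).ne' hpos₃.ne', log_mul hpos₁.ne' hpos₂.ne']
    ring
  have hint₁ := intervalIntegrable_neg_log_one_sub_mul_pow_div h₁ one_ne_zero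
  have hint₂ := intervalIntegrable_neg_log_one_sub_mul_pow_div h₂ three_ne_zero
  have hint₃ := intervalIntegrable_neg_log_one_sub_mul_pow_div h₃ one_ne_zero
  rw [intervalIntegral.integral_congr_Ioo_of_le zero_le_one hfactor,
    intervalIntegral.integral_sub (hint₁.add hint₂) hint₃,
    intervalIntegral.integral_add hint₁ hint₂,
    integral_neg_log_one_sub_mul_pow_div h₁ one_ne_zero,
    integral_neg_log_one_sub_mul_pow_div h₂ three_ne_zero,
    integral_neg_log_one_sub_mul_pow_div h₃ one_ne_zero]
  norm_num

end SpecialValues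

theorem stmt_2 :
    ∑' k : ℕ, (8/3 : ℝ)^(k+1) / (((k:ℝ)+1)^2 * (((3*(k+1)).choose (k+1) : ℕ) : ℝ)) =
    π^2/6 - (1/2)*(Real.log 3)^2 := by
  have hsum := hasSum_pow_div_sq_mul_choose (m := 2) (z := 8 / 3) (by norm_num [abs_of_pos])
  rw [integral_neg_log_one_sub_eight_thirds_mul_div,
    dilog_two_thirds_add_dilog_neg_eight_sub_dilog_neg_two] at hsum
  exact hsum.tsum_eq
end

section
/- ∑_{k=1}^∞ 6^k / (k² · C(3k,k)) = 6·arctan²(√3/(2·2^{1/3} − 1)) − (1/2)·log²(3/(2^{1/3}+1)³). -/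
open Real

/-!
Write `x = 27 y³ / (1 + y³)²` and let `ω` be a primitive cube root of unity. The cubic
`1 - x t (1 - t)²` in `t` then splits, the reciprocals of its roots being `3 z / (1 + z)²` for
`z = y, ω y, ω² y`. By the beta integral, the derivative in `x` of `∑ xᵏ / (k² C(3k, k))` is
`∫₀¹ (1 - t)² / (1 - x t (1 - t)²) dt`, hence by partial fractions a combination of the three
logarithms `log (1 + ωʲ y)`. In terms of the discrete Fourier coefficients
`U = ∑ ωʲ log (1 + ωʲ y)` and `V = ∑ ω²ʲ log (1 + ωʲ y)` this derivative, taken in `y`, is that of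
`-2 U V`. For real `y` the logarithms of `1 + ω y` and `1 + ω² y` are conjugate, and their real and
imaginary parts give the logarithm and the arctangent.
-/

namespace InvChoose

theorem eqOn_of_hasDerivAt {𝕜 G : Type*} [RCLike 𝕜] [NormedAddCommGroup G] [NormedSpace 𝕜 G]
    {s : Set 𝕜} (hs : IsOpen s) (hs' : IsPreconnected s) {f g f' : 𝕜 → G}
    (hf : ∀ x ∈ s, HasDerivAt f (f' x) x) (hg : ∀ x ∈ s, HasDerivAt g (f' x) x) {a : 𝕜}
    (ha : a ∈ s) (hfg : f a = g a) : s.EqOn f g :=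
  hs.eqOn_of_deriv_eq hs' (fun x hx ↦ (hf x hx).differentiableAt.differentiableWithinAt)
    (fun x hx ↦ (hg x hx).differentiableAt.differentiableWithinAt)
    (fun x hx ↦ (hf x hx).deriv.trans (hg x hx).deriv.symm) ha hfg

theorem integral_pow_mul_one_sub_pow (m n : ℕ) :
    ∫ t in (0 : ℝ)..1, (t : ℂ) ^ m * (1 - t) ^ n =
      1 / ((m + 1) * ((m + n + 1).choose (m + 1) : ℂ)) := by
  have hbeta := Complex.betaIntegral_eq_Gamma_mul_div (m + 1) (n + 1)
    (by rw [← Nat.cast_succ, Complex.natCast_re]; positivity)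
    (by rw [← Nat.cast_succ, Complex.natCast_re]; positivity)
  simp only [Complex.betaIntegral, add_sub_cancel_right, Complex.cpow_natCast] at hbeta
  have hchoose : (m + 1 + n).choose (m + 1) * (m + 1).factorial * n.factorial =
      (m + 1 + n).factorial := by
    simpa using Nat.choose_mul_factorial_mul_factorial (Nat.le_add_right (m + 1) n)
  have hcast : (m + 1 + (n + 1) : ℂ) = (m + 1 + n : ℕ) + 1 := by push_cast; ring
  have hchoose0 : ((m + 1 + n).choose (m + 1) : ℂ) ≠ 0 :=
    mod_cast (Nat.choose_pos (Nat.le_add_right (m + 1) n)).ne'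
  have hm0 : (m.factorial : ℂ) ≠ 0 := mod_cast m.factorial_ne_zero
  have hn0 : (n.factorial : ℂ) ≠ 0 := mod_cast n.factorial_ne_zero
  rw [hbeta, hcast, add_right_comm m n 1]
  simp only [Complex.Gamma_nat_eq_factorial]
  rw [← hchoose, Nat.factorial_succ]
  push_cast
  field_simp

theorem integral_mul_one_sub_sq_pow (k : ℕ) :
    ∫ t in (0 : ℝ)..1, ((t : ℂ) * (1 - t) ^ 2) ^ k * (1 - t) ^ 2 =
      1 / ((k + 1) * ((3 * (k + 1)).choose (k + 1) : ℂ)) := by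
  rw [show 3 * (k + 1) = k + (2 * k + 2) + 1 by ring, ← integral_pow_mul_one_sub_pow]
  congr 1 with t
  rw [mul_pow, ← pow_mul, mul_assoc, ← pow_add]

theorem mul_one_sub_sq_le {t : ℝ} (ht : t ≤ 1) : t * (1 - t) ^ 2 ≤ 4 / 27 := by
  nlinarith [mul_nonneg (sq_nonneg (t - 1 / 3)) (by linarith : (0 : ℝ) ≤ 4 / 3 - t)]

theorem norm_mul_one_sub_sq_le {t : ℝ} (ht : t ∈ Set.Icc 0 1) :
    ‖(t : ℂ) * (1 - t) ^ 2‖ ≤ 4 / 27 := by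
  have hnonneg : 0 ≤ t * (1 - t) ^ 2 := mul_nonneg ht.1 (sq_nonneg _)
  rw [← Complex.ofReal_one, ← Complex.ofReal_sub, ← Complex.ofReal_pow, ← Complex.ofReal_mul,
    Complex.norm_of_nonneg hnonneg]
  exact mul_one_sub_sq_le ht.2

theorem norm_pow_mul_one_sub_sq_le (x : ℂ) (k : ℕ) {t : ℝ} (ht : t ∈ Set.Icc 0 1) :
    ‖(x * (t * (1 - t) ^ 2)) ^ k * (1 - t) ^ 2‖ ≤ (‖x‖ * (4 / 27)) ^ k := by
  have hsq : ‖(1 - t : ℂ) ^ 2‖ ≤ 1 := by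
    rw [norm_pow, ← Complex.ofReal_one, ← Complex.ofReal_sub,
      Complex.norm_of_nonneg (sub_nonneg.2 ht.2)]
    exact pow_le_one₀ (sub_nonneg.2 ht.2) (by linarith [ht.1])
  calc ‖(x * (t * (1 - t) ^ 2)) ^ k * (1 - t) ^ 2‖
      ≤ ‖x * (t * (1 - t) ^ 2)‖ ^ k := by
        rw [norm_mul, norm_pow]
        exact mul_le_of_le_one_right (by positivity) hsq
    _ ≤ (‖x‖ * (4 / 27)) ^ k := by
        rw [norm_mul]
        gcongr
        exact norm_mul_one_sub_sq_le ht

theorem norm_pow_div_succ_mul_choose_le (x : ℂ) (k : ℕ) :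
    ‖x ^ k / ((k + 1) * ((3 * (k + 1)).choose (k + 1) : ℂ))‖ ≤ (‖x‖ * (4 / 27)) ^ k := by
  have hnorm := intervalIntegral.norm_integral_le_of_norm_le_const (a := 0) (b := 1)
    fun t ht ↦ norm_pow_mul_one_sub_sq_le x k (t := t) (by
      rw [Set.uIoc_of_le zero_le_one] at ht
      exact Set.Ioc_subset_Icc_self ht)
  simp_rw [mul_pow x, mul_assoc, intervalIntegral.integral_const_mul,
    integral_mul_one_sub_sq_pow] at hnorm
  simpa [div_eq_mul_inv] using hnorm

theorem hasSum_pow_div_succ_mul_choose {x : ℂ} (hx : ‖x‖ < 27 / 4) :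
    HasSum (fun k : ℕ ↦ x ^ k / ((k + 1) * ((3 * (k + 1)).choose (k + 1) : ℂ)))
      (∫ t in (0 : ℝ)..1, (1 - t : ℂ) ^ 2 / (1 - x * t * (1 - t) ^ 2)) := by
  have hterm (k : ℕ) : x ^ k / ((k + 1) * ((3 * (k + 1)).choose (k + 1) : ℂ)) =
      ∫ t in (0 : ℝ)..1, (x * (t * (1 - t) ^ 2)) ^ k * (1 - t : ℂ) ^ 2 := by
    simp_rw [mul_pow x, mul_assoc, intervalIntegral.integral_const_mul,
      integral_mul_one_sub_sq_pow, div_eq_mul_inv, one_mul]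
  have hratio : ‖x‖ * (4 / 27) < 1 := by linarith
  have hmem {t : ℝ} (ht : t ∈ Set.uIoc 0 1) : t ∈ Set.Icc 0 1 := by
    rw [Set.uIoc_of_le zero_le_one] at ht
    exact Set.Ioc_subset_Icc_self ht
  simp_rw [hterm]
  refine intervalIntegral.hasSum_integral_of_dominated_convergence
    (fun k _ ↦ (‖x‖ * (4 / 27)) ^ k) (fun k ↦ ?_)
    (fun k ↦ .of_forall fun t ht ↦ norm_pow_mul_one_sub_sq_le x k (hmem ht))
    (.of_forall fun _ _ ↦ summable_geometric_of_lt_one (by positivity) hratio)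
    intervalIntegrable_const (.of_forall fun t ht ↦ ?_)
  · exact Continuous.aestronglyMeasurable (by fun_prop)
  · have hlt : ‖x * (t * (1 - t) ^ 2)‖ < 1 := by
      rw [norm_mul]
      exact (mul_le_mul_of_nonneg_left (norm_mul_one_sub_sq_le (hmem ht)) (norm_nonneg x)).trans_lt
        hratio
    rw [div_eq_inv_mul, mul_assoc x]
    exact (hasSum_geometric_of_norm_lt_one hlt).mul_right _

/-- The power series `∑ x ^ k / (k ^ 2 * C(3k, k))` over `k ≥ 1`, with `k` shifted by one. -/
noncomputable def series (x : ℂ) : ℂ :=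
  ∑' k : ℕ, x ^ (k + 1) / ((k + 1) ^ 2 * ((3 * (k + 1)).choose (k + 1) : ℂ))

theorem hasSum_series {x : ℂ} (hx : ‖x‖ < 27 / 4) :
    HasSum (fun k : ℕ ↦ x ^ (k + 1) / ((k + 1) ^ 2 * ((3 * (k + 1)).choose (k + 1) : ℂ)))
      (series x) := by
  refine Summable.hasSum (.of_norm_bounded
    (summable_geometric_of_lt_one (by positivity) (by linarith : ‖x‖ * (4 / 27) < 1)
      |>.mul_left ‖x‖) fun k ↦ ?_)
  have hfactor : x ^ (k + 1) / ((k + 1) ^ 2 * ((3 * (k + 1)).choose (k + 1) : ℂ)) =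
      x * (x ^ k / ((k + 1) * ((3 * (k + 1)).choose (k + 1) : ℂ))) / (k + 1 : ℕ) := by
    rw [pow_succ', ← mul_div_assoc, div_div]
    push_cast
    ring_nf
  rw [hfactor, norm_div, norm_mul, Complex.norm_natCast]
  exact (div_le_self (by positivity) (by simp)).trans
    (mul_le_mul_of_nonneg_left (norm_pow_div_succ_mul_choose_le x k) (norm_nonneg x))

theorem hasDerivAt_series {x : ℂ} (hx : ‖x‖ < 27 / 4) :
    HasDerivAt series
      (∫ t in (0 : ℝ)..1, (1 - t : ℂ) ^ 2 / (1 - x * t * (1 - t) ^ 2)) x := by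
  obtain ⟨r, hxr, hr⟩ := exists_between hx
  have hr0 : 0 < r := (norm_nonneg x).trans_lt hxr
  have hzero : ‖(0 : ℂ)‖ < 27 / 4 := by norm_num
  have hsummable : Summable fun k : ℕ ↦ (r * (4 / 27)) ^ k :=
    summable_geometric_of_lt_one (by positivity) (by linarith)
  have hderiv (k : ℕ) (y : ℂ) : HasDerivAt
      (fun x : ℂ ↦ x ^ (k + 1) / ((k + 1) ^ 2 * ((3 * (k + 1)).choose (k + 1) : ℂ)))
      (y ^ k / ((k + 1) * ((3 * (k + 1)).choose (k + 1) : ℂ))) y := by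
    have hk : (k + 1 : ℂ) ≠ 0 := k.cast_add_one_ne_zero
    convert! (hasDerivAt_pow (k + 1) y).div_const
      ((k + 1) ^ 2 * ((3 * (k + 1)).choose (k + 1) : ℂ)) using 1
    rw [Nat.add_sub_cancel]
    push_cast
    field_simp
  have hbound (k : ℕ) (y : ℂ) (hy : y ∈ Metric.ball 0 r) :
      ‖y ^ k / ((k + 1) * ((3 * (k + 1)).choose (k + 1) : ℂ))‖ ≤ (r * (4 / 27)) ^ k := by
    refine (norm_pow_div_succ_mul_choose_le y k).trans ?_
    gcongr
    exact (mem_ball_zero_iff.1 hy).le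
  rw [← (hasSum_pow_div_succ_mul_choose hx).tsum_eq]
  exact hasDerivAt_tsum_of_isPreconnected hsummable Metric.isOpen_ball
    (convex_ball 0 r).isPreconnected (fun k y _ ↦ hderiv k y) hbound (Metric.mem_ball_self hr0)
    (hasSum_series hzero).summable (mem_ball_zero_iff.2 hxr)

theorem one_add_ne_zero_of_norm_lt_one {z : ℂ} (hz : ‖z‖ < 1) : 1 + z ≠ 0 :=
  Complex.slitPlane_ne_zero (Complex.mem_slitPlane_of_norm_lt_one hz)

theorem one_sub_ne_zero_of_norm_lt_one {z : ℂ} (hz : ‖z‖ < 1) : 1 - z ≠ 0 := by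
  simpa [sub_eq_add_neg] using one_add_ne_zero_of_norm_lt_one (z := -z) (by simpa)

theorem norm_cube_lt_one {z : ℂ} (hz : ‖z‖ < 1) : ‖z ^ 3‖ < 1 := by
  rw [norm_pow]
  exact pow_lt_one₀ (norm_nonneg z) hz three_ne_zero

/-- The parametrization `x = param y` of the argument of `series` for which the cubic
`1 - x * t * (1 - t) ^ 2` in `t` splits explicitly. -/
noncomputable def param (y : ℂ) : ℂ :=
  27 * y ^ 3 / (1 + y ^ 3) ^ 2

theorem hasDerivAt_param {y : ℂ} (hy : 1 + y ^ 3 ≠ 0) :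
    HasDerivAt param (81 * y ^ 2 * (1 - y ^ 3) / (1 + y ^ 3) ^ 3) y := by
  convert! ((hasDerivAt_pow 3 y).const_mul 27).fun_div
    (((hasDerivAt_pow 3 y).const_add 1).fun_pow 2) (pow_ne_zero 2 hy) using 1
  simp only [Nat.cast_ofNat, Nat.add_one_sub_one, pow_one]
  field_simp
  ring

/-- The reciprocal of a root: the roots of `1 - param y * t * (1 - t) ^ 2` in `t` are the
`(recipRoot (ω ^ j * y))⁻¹` for `ω` a primitive cube root of unity. -/
noncomputable def recipRoot (y : ℂ) : ℂ :=
  3 * y / (1 + y) ^ 2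

theorem one_add_sq_sub_eq {z : ℂ} (hz : 1 + z ≠ 0) (t : ℂ) :
    (1 + z) ^ 2 - 3 * z * t = (1 + z) ^ 2 * (1 - t * recipRoot z) := by
  rw [recipRoot]
  field_simp

theorem one_sub_recipRoot_eq {y : ℂ} (hy : 1 + y ≠ 0) :
    1 - recipRoot y = (1 + y ^ 3) / (1 + y) ^ 3 := by
  rw [recipRoot]
  field_simp
  ring

theorem re_one_sub_div_one_add_pos {y : ℂ} (hy : ‖y‖ < 1) : 0 < ((1 - y) / (1 + y)).re := by
  have hsq : y.re * y.re + y.im * y.im < 1 := by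
    rw [← Complex.normSq_apply, ← Complex.sq_norm]
    exact pow_lt_one₀ (norm_nonneg y) hy two_ne_zero
  rw [Complex.div_re, ← add_div]
  refine div_pos ?_ (Complex.normSq_pos.2 (one_add_ne_zero_of_norm_lt_one hy))
  simp only [Complex.sub_re, Complex.one_re, Complex.add_re, Complex.sub_im, Complex.one_im,
    zero_sub, Complex.add_im, zero_add, neg_mul, lt_add_neg_iff_add_lt]
  linarith

theorem sq_mem_slitPlane_of_re_pos {w : ℂ} (hw : 0 < w.re) : w ^ 2 ∈ Complex.slitPlane := by
  rw [Complex.mem_slitPlane_iff]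
  by_cases him : w.im = 0
  · left
    simp only [pow_two, Complex.mul_re, him, mul_zero, sub_zero]
    positivity
  · right
    simpa [pow_two, ← two_mul, mul_comm w.im] using And.intro hw.ne' him

-- `recipRoot y = (3 / 4) * (1 - w ^ 2)` for the Cayley transform `w = (1 - y) / (1 + y)`.
theorem one_sub_recipRoot_mem_slitPlane {y : ℂ} (hy : ‖y‖ < 1) :
    1 - recipRoot y ∈ Complex.slitPlane := by
  have hy1 := one_add_ne_zero_of_norm_lt_one hy
  have hsq := sq_mem_slitPlane_of_re_pos (re_one_sub_div_one_add_pos hy)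
  have hcomb : 1 - recipRoot y = 1 + (3 / 4 : ℝ) • (((1 - y) / (1 + y)) ^ 2 - 1) := by
    rw [recipRoot, div_pow, Complex.real_smul]
    push_cast
    field_simp
    ring
  rw [hcomb]
  exact Complex.starConvex_one_slitPlane.add_smul_mem (by simpa using hsq) (by norm_num)
    (by norm_num)

theorem hasDerivAt_recipRoot {y : ℂ} (hy : 1 + y ≠ 0) :
    HasDerivAt recipRoot (3 * (1 - y) / (1 + y) ^ 3) y := by
  convert! ((hasDerivAt_id y).const_mul 3).fun_div (((hasDerivAt_id y).const_add 1).fun_pow 2)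
    (pow_ne_zero 2 hy) using 1
  simp only [mul_one, id_eq, Nat.cast_ofNat, Nat.add_one_sub_one, pow_one]
  field_simp
  ring

theorem hasDerivAt_log_one_sub_recipRoot {y : ℂ} (hy : ‖y‖ < 1) :
    HasDerivAt (fun z ↦ Complex.log (1 - recipRoot z)) (-3 * (1 - y) / (1 + y ^ 3)) y := by
  have hy1 := one_add_ne_zero_of_norm_lt_one hy
  have hy3 := one_add_ne_zero_of_norm_lt_one (norm_cube_lt_one hy)
  convert! ((hasDerivAt_recipRoot hy1).const_sub 1).clog
    (one_sub_recipRoot_mem_slitPlane hy) using 1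
  rw [one_sub_recipRoot_eq hy1]
  field_simp

theorem log_one_sub_recipRoot {y : ℂ} (hy : ‖y‖ < 1) :
    Complex.log (1 - recipRoot y) = Complex.log (1 + y ^ 3) - 3 * Complex.log (1 + y) := by
  have hderiv (z : ℂ) (hz : z ∈ Metric.ball (0 : ℂ) 1) :
      HasDerivAt (fun z ↦ Complex.log (1 + z ^ 3) - 3 * Complex.log (1 + z))
        (-3 * (1 - z) / (1 + z ^ 3)) z := by
    rw [mem_ball_zero_iff] at hz
    have hz1 := one_add_ne_zero_of_norm_lt_one hz
    have hz3 := one_add_ne_zero_of_norm_lt_one (norm_cube_lt_one hz)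
    convert! (((hasDerivAt_pow 3 z).const_add 1).clog
        (Complex.mem_slitPlane_of_norm_lt_one (norm_cube_lt_one hz))).sub
      ((((hasDerivAt_id z).const_add 1).clog
        (Complex.mem_slitPlane_of_norm_lt_one hz)).const_mul 3) using 1
    simp only [neg_mul, Nat.cast_ofNat, Nat.add_one_sub_one, id_eq, one_div]
    field_simp
    ring
  exact eqOn_of_hasDerivAt Metric.isOpen_ball (convex_ball (0 : ℂ) 1).isPreconnected
    (fun z hz ↦ hasDerivAt_log_one_sub_recipRoot (mem_ball_zero_iff.1 hz)) hderiv
    (Metric.mem_ball_self one_pos) (by simp [recipRoot]) (mem_ball_zero_iff.2 hy)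

theorem one_sub_mul_recipRoot_ne_zero {z : ℂ} (hz : ‖z‖ < 1) {t : ℝ} (ht : t ∈ Set.Icc 0 1) :
    1 - t * recipRoot z ≠ 0 := by
  have hmem : 1 + -recipRoot z ∈ Complex.slitPlane := by
    simpa [sub_eq_add_neg] using one_sub_recipRoot_mem_slitPlane hz
  simpa [sub_eq_add_neg] using Complex.slitPlane_ne_zero
    (Complex.starConvex_one_slitPlane.add_smul_mem hmem ht.1 ht.2)

theorem one_add_sq_sub_ne_zero {z : ℂ} (hz : ‖z‖ < 1) {t : ℝ} (ht : t ∈ Set.Icc 0 1) :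
    (1 + z) ^ 2 - 3 * z * t ≠ 0 := by
  have hz0 := one_add_ne_zero_of_norm_lt_one hz
  rw [one_add_sq_sub_eq hz0]
  exact mul_ne_zero (pow_ne_zero 2 hz0) (one_sub_mul_recipRoot_ne_zero hz ht)

theorem intervalIntegrable_div_one_add_sq_sub {z : ℂ} (hz : ‖z‖ < 1) :
    IntervalIntegrable (fun t : ℝ ↦ 3 * z / ((1 + z) ^ 2 - 3 * z * t))
      MeasureTheory.volume 0 1 := by
  refine (ContinuousOn.div (by fun_prop) (by fun_prop) fun t ht ↦ ?_).intervalIntegrable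
  exact one_add_sq_sub_ne_zero hz (Set.uIcc_of_le (zero_le_one' ℝ) ▸ ht)

theorem integral_div_one_add_sq_sub {z : ℂ} (hz : ‖z‖ < 1) :
    ∫ t in (0 : ℝ)..1, 3 * z / ((1 + z) ^ 2 - 3 * z * t) =
      3 * Complex.log (1 + z) - Complex.log (1 + z ^ 3) := by
  have hmem := one_sub_recipRoot_mem_slitPlane hz
  have hfactor (t : ℝ) : 3 * z / ((1 + z) ^ 2 - 3 * z * t) =
      recipRoot z * (1 - t • recipRoot z)⁻¹ := by
    rw [one_add_sq_sub_eq (one_add_ne_zero_of_norm_lt_one hz), ← div_div, ← recipRoot,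
      div_eq_mul_inv, Complex.real_smul]
  simp_rw [hfactor]
  rw [intervalIntegral.integral_const_mul, ← Complex.log_inv_eq_integral hmem,
    Complex.log_inv _ (Complex.slitPlane_arg_ne_pi hmem), log_one_sub_recipRoot hz, neg_sub]

/-- The `m`-th discrete Fourier coefficient of `j ↦ log (1 + ω ^ j * y)`, for `ω` a primitive cube
root of unity. -/
noncomputable def logSum (ω : ℂ) (m : ℕ) (y : ℂ) : ℂ :=
  ∑ j ∈ Finset.range 3, ω ^ (m * j) * Complex.log (1 + ω ^ j * y)

section PrimitiveRoot

variable {ω : ℂ} (hω : IsPrimitiveRoot ω 3)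
include hω

theorem one_add_add_sq : 1 + ω + ω ^ 2 = 0 := by
  simpa [Finset.sum_range_succ] using hω.geom_sum_eq_zero (by norm_num)

theorem norm_pow_mul (j : ℕ) (y : ℂ) : ‖ω ^ j * y‖ = ‖y‖ := by
  simp [hω.norm'_eq_one three_ne_zero]

theorem cube_pow_mul (j : ℕ) (y : ℂ) : (ω ^ j * y) ^ 3 = y ^ 3 := by
  rw [mul_pow, pow_right_comm, hω.pow_eq_one, one_pow, one_mul]

theorem div_one_add_pow_mul (j : ℕ) {y : ℂ} (hy : 1 + y ^ 3 ≠ 0) :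
    1 / (1 + ω ^ j * y) = (1 - ω ^ j * y + (ω ^ j * y) ^ 2) / (1 + y ^ 3) := by
  rw [← cube_pow_mul hω j] at hy ⊢
  have hfactor : 1 + (ω ^ j * y) ^ 3 =
      (1 + ω ^ j * y) * (1 - ω ^ j * y + (ω ^ j * y) ^ 2) := by ring
  rw [hfactor] at hy ⊢
  rw [div_mul_cancel_right₀ (right_ne_zero_of_mul hy), one_div]

theorem sum_pow_mul_div_one_add {m : ℕ} (hm : m ≤ 2) {y : ℂ} (hy : 1 + y ^ 3 ≠ 0) :
    ∑ j ∈ Finset.range 3, ω ^ (m * j) * (ω ^ j * (1 / (1 + ω ^ j * y))) =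
      3 * (-y) ^ (2 - m) / (1 + y ^ 3) := by
  simp_rw [div_one_add_pow_mul hω _ hy, mul_div_assoc', ← Finset.sum_div]
  have hsum := one_add_add_sq hω
  congr 1
  interval_cases m <;> simp only [Finset.sum_range_succ, Finset.sum_range_zero] <;> grind

theorem hasDerivAt_logSum {m : ℕ} (hm : m ≤ 2) {y : ℂ} (hy : ‖y‖ < 1) :
    HasDerivAt (logSum ω m) (3 * (-y) ^ (2 - m) / (1 + y ^ 3)) y := by
  have hterm (j : ℕ) : HasDerivAt (fun z ↦ ω ^ (m * j) * Complex.log (1 + ω ^ j * z))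
      (ω ^ (m * j) * (ω ^ j * (1 / (1 + ω ^ j * y)))) y := by
    have hlt : ‖ω ^ j * y‖ < 1 := by rwa [norm_pow_mul hω]
    simpa [div_eq_mul_inv] using (((hasDerivAt_id y).const_mul (ω ^ j)).const_add 1).clog
      (Complex.mem_slitPlane_of_norm_lt_one hlt) |>.const_mul (ω ^ (m * j))
  rw [← sum_pow_mul_div_one_add hω hm (one_add_ne_zero_of_norm_lt_one (norm_cube_lt_one hy))]
  exact HasDerivAt.fun_sum fun j _ ↦ hterm j

theorem logSum_zero_apply {y : ℂ} (hy : ‖y‖ < 1) : logSum ω 0 y = Complex.log (1 + y ^ 3) := by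
  have hderiv (z : ℂ) (hz : z ∈ Metric.ball (0 : ℂ) 1) :
      HasDerivAt (fun z ↦ Complex.log (1 + z ^ 3)) (3 * (-z) ^ (2 - 0) / (1 + z ^ 3)) z := by
    simpa using ((hasDerivAt_pow 3 z).const_add 1).clog
      (Complex.mem_slitPlane_of_norm_lt_one (norm_cube_lt_one (mem_ball_zero_iff.1 hz)))
  exact eqOn_of_hasDerivAt Metric.isOpen_ball (convex_ball (0 : ℂ) 1).isPreconnected
    (fun z hz ↦ hasDerivAt_logSum hω zero_le_two (mem_ball_zero_iff.1 hz)) hderiv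
    (Metric.mem_ball_self one_pos) (by simp [logSum]) (mem_ball_zero_iff.2 hy)

theorem prod_one_add_sq_sub (y t : ℂ) :
    ∏ j ∈ Finset.range 3, ((1 + ω ^ j * y) ^ 2 - 3 * (ω ^ j * y) * t) =
      (1 + y ^ 3) ^ 2 - 27 * y ^ 3 * t * (1 - t) ^ 2 := by
  have hsum := one_add_add_sq hω
  simp only [Finset.prod_range_succ, Finset.prod_range_zero]
  grind

theorem one_add_cube_sq_sub_ne_zero {y : ℂ} (hy : ‖y‖ < 1) {t : ℝ} (ht : t ∈ Set.Icc 0 1) :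
    (1 + y ^ 3) ^ 2 - 27 * y ^ 3 * t * (1 - t) ^ 2 ≠ 0 := by
  rw [← prod_one_add_sq_sub hω, Finset.prod_ne_zero_iff]
  exact fun j _ ↦ one_add_sq_sub_ne_zero (by rwa [norm_pow_mul hω]) ht

-- For `z = ω ^ j * y` the coefficient of `1 / ((1 + z) ^ 2 / (3 * z) - t)` in the partial
-- fractions is `(1 - z + z ^ 2) / (3 * (1 + z + z ^ 2))`; expanding by `1 - z` and using
-- `z ^ 3 = y ^ 3` gives the weights below, over `3 * (1 - y ^ 3)`.
theorem sum_div_one_add_sq_sub {y t : ℂ}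
    (ht : (1 + y ^ 3) ^ 2 - 27 * y ^ 3 * t * (1 - t) ^ 2 ≠ 0) :
    ∑ j ∈ Finset.range 3, (1 - y ^ 3 - 2 * (ω ^ j * y) + 2 * (ω ^ j * y) ^ 2) *
        (3 * (ω ^ j * y) / ((1 + ω ^ j * y) ^ 2 - 3 * (ω ^ j * y) * t)) =
      3 * (1 - y ^ 3) *
        (27 * y ^ 3 * (1 - t) ^ 2 / ((1 + y ^ 3) ^ 2 - 27 * y ^ 3 * t * (1 - t) ^ 2)) := by
  have hsum := one_add_add_sq hω
  rw [← prod_one_add_sq_sub hω] at ht ⊢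
  obtain ⟨q, hq⟩ : ∃ q : ℕ → ℂ, ∀ j, (1 + ω ^ j * y) ^ 2 - 3 * (ω ^ j * y) * t = q j :=
    ⟨_, fun _ ↦ rfl⟩
  have hnum : y * (1 - y ^ 3 - 2 * y + 2 * y ^ 2) * (q 1 * q 2) +
      ω * y * (1 - y ^ 3 - 2 * (ω * y) + 2 * (ω * y) ^ 2) * (q 0 * q 2) +
      ω ^ 2 * y * (1 - y ^ 3 - 2 * (ω ^ 2 * y) + 2 * (ω ^ 2 * y) ^ 2) * (q 0 * q 1) =
      (1 - y ^ 3) * (27 * y ^ 3 * (1 - t) ^ 2) := by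
    simp only [← hq]
    grind
  simp only [hq, Finset.sum_range_succ, Finset.sum_range_zero, Finset.prod_range_succ,
    Finset.prod_range_zero, mul_ne_zero_iff] at ht ⊢
  obtain ⟨⟨⟨-, h0⟩, h1⟩, h2⟩ := ht
  field_simp
  linear_combination 3 * hnum

theorem three_mul_integral_eq_sum {y : ℂ} (hy : ‖y‖ < 1) :
    3 * (1 - y ^ 3) * (param y *
        ∫ t in (0 : ℝ)..1, (1 - t : ℂ) ^ 2 / (1 - param y * t * (1 - t) ^ 2)) =
      ∑ j ∈ Finset.range 3, (1 - y ^ 3 - 2 * (ω ^ j * y) + 2 * (ω ^ j * y) ^ 2) *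
        (3 * Complex.log (1 + ω ^ j * y) - Complex.log (1 + y ^ 3)) := by
  have hz (j : ℕ) : ‖ω ^ j * y‖ < 1 := by rwa [norm_pow_mul hω]
  have hy3 := one_add_ne_zero_of_norm_lt_one (norm_cube_lt_one hy)
  have hpartial {t : ℝ} (ht : t ∈ Set.uIcc 0 1) :
      3 * (1 - y ^ 3) * (param y * ((1 - t : ℂ) ^ 2 / (1 - param y * t * (1 - t) ^ 2))) =
      ∑ j ∈ Finset.range 3, (1 - y ^ 3 - 2 * (ω ^ j * y) + 2 * (ω ^ j * y) ^ 2) *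
        (3 * (ω ^ j * y) / ((1 + ω ^ j * y) ^ 2 - 3 * (ω ^ j * y) * t)) := by
    rw [Set.uIcc_of_le zero_le_one] at ht
    rw [sum_div_one_add_sq_sub hω (one_add_cube_sq_sub_ne_zero hω hy ht), param]
    field_simp
  rw [← intervalIntegral.integral_const_mul, ← intervalIntegral.integral_const_mul,
    intervalIntegral.integral_congr fun t ht ↦ hpartial ht,
    intervalIntegral.integral_finsetSum fun j _ ↦
      (intervalIntegrable_div_one_add_sq_sub (hz j)).const_mul _]
  simp_rw [intervalIntegral.integral_const_mul, integral_div_one_add_sq_sub (hz _),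
    cube_pow_mul hω]

theorem mul_integral_eq_logSum {y : ℂ} (hy : ‖y‖ < 1) :
    (1 - y ^ 3) * (param y *
        ∫ t in (0 : ℝ)..1, (1 - t : ℂ) ^ 2 / (1 - param y * t * (1 - t) ^ 2)) =
      -2 * (y * logSum ω 1 y - y ^ 2 * logSum ω 2 y) := by
  have hintegral := three_mul_integral_eq_sum hω hy
  have hsum := one_add_add_sq hω
  rw [← logSum_zero_apply hω hy] at hintegral
  simp only [logSum, Finset.sum_range_succ, Finset.sum_range_zero] at hintegral ⊢
  grind

theorem hasDerivAt_logSum_mul_logSum {y : ℂ} (hy : ‖y‖ < 1) :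
    HasDerivAt (fun z ↦ -2 * logSum ω 1 z * logSum ω 2 z)
      (-6 * (logSum ω 1 y - y * logSum ω 2 y) / (1 + y ^ 3)) y := by
  convert! ((hasDerivAt_logSum hω one_le_two hy).const_mul (-2)).fun_mul
    (hasDerivAt_logSum hω le_rfl hy) using 1
  simp only [neg_mul, Nat.add_one_sub_one, pow_one, mul_neg, tsub_self, pow_zero, mul_one]
  field_simp
  ring

theorem hasDerivAt_series_param {y : ℂ} (hy : ‖y‖ < 1) (hx : ‖param y‖ < 27 / 4) :
    HasDerivAt (fun z ↦ series (param z))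
      (-6 * (logSum ω 1 y - y * logSum ω 2 y) / (1 + y ^ 3)) y := by
  have hy3 := one_add_ne_zero_of_norm_lt_one (norm_cube_lt_one hy)
  have hy3' := one_sub_ne_zero_of_norm_lt_one (norm_cube_lt_one hy)
  convert! (hasDerivAt_series hx).comp y (hasDerivAt_param hy3) using 1
  rcases eq_or_ne y 0 with rfl | hy0
  · simp [logSum]
  · have hintegral := mul_integral_eq_logSum hω hy
    set I := ∫ t in (0 : ℝ)..1, (1 - t : ℂ) ^ 2 / (1 - param y * t * (1 - t) ^ 2)
    rw [param] at hintegral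
    field_simp at hintegral ⊢
    linear_combination -3 * hintegral

end PrimitiveRoot

theorem mul_norm_one_add_sq_le {u : ℂ} (hu : ‖u‖ ≤ 1) {r : ℝ} (hr : r ∈ Set.Icc 0 1) :
    r * ‖1 + u‖ ^ 2 ≤ ‖1 + r * u‖ ^ 2 := by
  have hu2 : u.re * u.re + u.im * u.im ≤ 1 := by
    rw [← Complex.normSq_apply, ← Complex.sq_norm]
    exact pow_le_one₀ (norm_nonneg u) hu
  simp only [Complex.sq_norm, Complex.normSq_apply, Complex.add_re, Complex.add_im, Complex.one_re,
    Complex.one_im, Complex.re_ofReal_mul, Complex.im_ofReal_mul]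
  nlinarith [mul_nonneg (sub_nonneg.2 hr.2)
    (sub_nonneg.2 (mul_le_one₀ hr.2 (by nlinarith) hu2 : r * (u.re * u.re + u.im * u.im) ≤ 1))]

theorem norm_param_mul_le {y : ℂ} (hy : ‖y‖ < 1) {r : ℝ} (hr : r ∈ Set.Icc 0 1) :
    ‖param (r * y)‖ ≤ ‖param y‖ := by
  have hr3 : r ^ 3 ∈ Set.Icc 0 1 := ⟨pow_nonneg hr.1 3, pow_le_one₀ hr.1 hr.2⟩
  have hle := mul_norm_one_add_sq_le (norm_cube_lt_one hy).le hr3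
  have hpos := norm_pos_iff.2 (one_add_ne_zero_of_norm_lt_one (norm_cube_lt_one hy))
  push_cast at hle
  simp only [param, norm_div, norm_mul, norm_pow, mul_pow, Complex.norm_real, Complex.norm_ofNat,
    Real.norm_of_nonneg hr.1]
  rcases hr3.1.eq_or_lt with h0 | h0
  · rw [← h0]
    simp only [zero_mul, mul_zero, zero_div]
    positivity
  calc 27 * (r ^ 3 * ‖y‖ ^ 3) / ‖1 + r ^ 3 * y ^ 3‖ ^ 2
      ≤ 27 * (r ^ 3 * ‖y‖ ^ 3) / (r ^ 3 * ‖1 + y ^ 3‖ ^ 2) := by gcongr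
    _ = 27 * ‖y‖ ^ 3 / ‖1 + y ^ 3‖ ^ 2 := by
      rw [mul_left_comm, mul_div_mul_left _ _ h0.ne']

/-- The points of the unit disc which `param` maps into the disc of convergence of `series`. -/
def domain : Set ℂ :=
  Metric.ball 0 1 ∩ param ⁻¹' Metric.ball 0 (27 / 4)

theorem isOpen_domain : IsOpen domain := by
  refine ContinuousOn.isOpen_inter_preimage (fun y hy ↦ ?_) Metric.isOpen_ball Metric.isOpen_ball
  have hy3 := one_add_ne_zero_of_norm_lt_one (norm_cube_lt_one (mem_ball_zero_iff.1 hy))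
  exact (hasDerivAt_param hy3).continuousAt.continuousWithinAt

theorem starConvex_domain : StarConvex ℝ 0 domain := by
  refine starConvex_zero_iff.2 fun y hy r hr0 hr1 ↦ ?_
  simp only [domain, Set.mem_inter_iff, Set.mem_preimage, mem_ball_zero_iff,
    Complex.real_smul] at hy ⊢
  refine ⟨?_, (norm_param_mul_le hy.1 ⟨hr0, hr1⟩).trans_lt hy.2⟩
  rw [norm_mul, Complex.norm_of_nonneg hr0]
  exact (mul_le_of_le_one_left (norm_nonneg y) hr1).trans_lt hy.1

theorem series_param {ω : ℂ} (hω : IsPrimitiveRoot ω 3) {y : ℂ} (hy : ‖y‖ < 1)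
    (hx : ‖param y‖ < 27 / 4) :
    series (param y) = -2 * logSum ω 1 y * logSum ω 2 y := by
  have hzero : (0 : ℂ) ∈ domain := by simp [domain, param]
  exact eqOn_of_hasDerivAt isOpen_domain
    (starConvex_domain.isPathConnected hzero).isConnected.isPreconnected
    (fun z hz ↦ hasDerivAt_series_param hω (mem_ball_zero_iff.1 hz.1) (mem_ball_zero_iff.1 hz.2))
    (fun z hz ↦ hasDerivAt_logSum_mul_logSum hω (mem_ball_zero_iff.1 hz.1)) hzero
    (by simp [param, series, logSum]) ⟨mem_ball_zero_iff.2 hy, mem_ball_zero_iff.2 hx⟩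

theorem sq_eq_conj {ω : ℂ} (hω : IsPrimitiveRoot ω 3) : ω ^ 2 = starRingEnd ℂ ω := by
  rw [← Complex.inv_eq_conj (hω.norm'_eq_one three_ne_zero)]
  exact eq_inv_of_mul_eq_one_left (by rw [← pow_succ, hω.pow_eq_one])

theorem log_one_add_sq_mul {ω : ℂ} (hω : IsPrimitiveRoot ω 3) {y : ℝ} (hy : |y| < 1) :
    Complex.log (1 + ω ^ 2 * y) = starRingEnd ℂ (Complex.log (1 + ω * y)) := by
  have hnorm : ‖ω * y‖ < 1 := by simpa [hω.norm'_eq_one three_ne_zero]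
  have hmem := Complex.mem_slitPlane_of_norm_lt_one hnorm
  rw [← Complex.log_conj _ (Complex.slitPlane_arg_ne_pi hmem)]
  simp [sq_eq_conj hω]

/-- The primitive cube root of unity in the upper half-plane. -/
noncomputable def cubeRootOne : ℂ := -1 / 2 + √3 / 2 * Complex.I

theorem cubeRootOne_re : cubeRootOne.re = -1 / 2 := by
  simp [cubeRootOne]

theorem cubeRootOne_im : cubeRootOne.im = √3 / 2 := by
  simp [cubeRootOne]

theorem isPrimitiveRoot_cubeRootOne : IsPrimitiveRoot cubeRootOne 3 := by
  have hsqrt : (√3 : ℂ) ^ 2 = 3 := mod_cast Real.sq_sqrt zero_le_three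
  have hcube : cubeRootOne ^ 3 = 1 := by
    rw [cubeRootOne]
    grind [Complex.I_sq]
  have hne : cubeRootOne ≠ 1 := fun h ↦ by
    have hre := cubeRootOne_re
    norm_num [h] at hre
  exact orderOf_eq_prime hcube hne ▸ IsPrimitiveRoot.orderOf cubeRootOne

theorem log_one_add_cubeRootOne_mul {y : ℝ} (hy : |y| < 1) :
    Complex.log (1 + cubeRootOne * y) =
      (Real.log (1 - y + y ^ 2) / 2 : ℝ) + (Real.arctan (√3 * y / (2 - y)) : ℝ) * Complex.I := by
  set z : ℂ := 1 + cubeRootOne * y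
  have hlt := abs_lt.1 hy
  have hre : z.re = (2 - y) / 2 := by
    simp only [z, Complex.add_re, Complex.one_re, Complex.re_mul_ofReal, cubeRootOne_re]
    ring
  have him : z.im = √3 * y / 2 := by
    simp only [z, Complex.add_im, Complex.one_im, Complex.im_mul_ofReal, cubeRootOne_im]
    ring
  have hnorm : ‖z‖ ^ 2 = 1 - y + y ^ 2 := by
    rw [Complex.sq_norm, Complex.normSq_apply, hre, him]
    linear_combination y ^ 2 / 4 * Real.sq_sqrt zero_le_three
  have harg : |z.arg| < π / 2 :=
    Complex.abs_arg_lt_pi_div_two_iff.2 (.inl (by rw [hre]; linarith))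
  have htan : √3 * y / (2 - y) = Real.tan z.arg := by
    rw [Complex.tan_arg, hre, him]
    field_simp
  rw [htan, Real.arctan_tan (abs_lt.1 harg).1 (abs_lt.1 harg).2, ← hnorm, Real.log_pow,
    Nat.cast_two, mul_div_cancel_left₀ _ two_ne_zero, Complex.log]

theorem log_one_add_cube_div {y : ℝ} (hy : |y| < 1) :
    Real.log ((1 + y ^ 3) / (1 + y) ^ 3) =
      Real.log (1 - y + y ^ 2) - 2 * Real.log (1 + y) := by
  have hpos : 0 < 1 + y := by linarith [(abs_lt.1 hy).1]
  have hpos' : 0 < 1 - y + y ^ 2 := by nlinarith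
  have hratio : (1 + y ^ 3) / (1 + y) ^ 3 = (1 - y + y ^ 2) / (1 + y) ^ 2 := by
    field_simp
    ring
  rw [hratio, Real.log_div hpos'.ne' (pow_pos hpos 2).ne', Real.log_pow, Nat.cast_two]

theorem neg_two_mul_logSum_mul_logSum {y : ℝ} (hy : |y| < 1) :
    -2 * logSum cubeRootOne 1 y * logSum cubeRootOne 2 y =
      (6 * Real.arctan (√3 * y / (2 - y)) ^ 2 -
        1 / 2 * Real.log ((1 + y ^ 3) / (1 + y) ^ 3) ^ 2 : ℝ) := by
  have hpos : 0 ≤ 1 + y := by linarith [(abs_lt.1 hy).1]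
  have hlog0 : Complex.log (1 + y) = (Real.log (1 + y) : ℝ) := by
    rw [Complex.ofReal_log hpos, Complex.ofReal_add, Complex.ofReal_one]
  have hlog1 := log_one_add_cubeRootOne_mul hy
  have hlog2 := hlog1 ▸ log_one_add_sq_mul isPrimitiveRoot_cubeRootOne hy
  simp only [map_add, map_mul, Complex.conj_ofReal, Complex.conj_I] at hlog2
  have hsqrt : (√3 : ℂ) ^ 2 = 3 := mod_cast Real.sq_sqrt zero_le_three
  have hsum := one_add_add_sq isPrimitiveRoot_cubeRootOne
  rw [log_one_add_cube_div hy]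
  simp only [logSum, Finset.sum_range_succ, Finset.sum_range_zero, pow_zero, pow_one, one_mul,
    hlog0, hlog1, hlog2]
  generalize Real.log (1 + y) = a, Real.log (1 - y + y ^ 2) = b,
    Real.arctan (√3 * y / (2 - y)) = c
  push_cast
  have hdef := cubeRootOne.eq_def
  grind [Complex.I_sq]

theorem hasSum_of_abs_lt_one {y : ℝ} (hy : |y| < 1) (hx : |27 * y ^ 3 / (1 + y ^ 3) ^ 2| < 27 / 4) :
    HasSum (fun k : ℕ ↦ (27 * y ^ 3 / (1 + y ^ 3) ^ 2) ^ (k + 1) /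
        (((k : ℝ) + 1) ^ 2 * ((3 * (k + 1)).choose (k + 1) : ℕ)))
      (6 * Real.arctan (√3 * y / (2 - y)) ^ 2 -
        1 / 2 * Real.log ((1 + y ^ 3) / (1 + y) ^ 3) ^ 2) := by
  have hparam : param y = (27 * y ^ 3 / (1 + y ^ 3) ^ 2 : ℝ) := by
    rw [param]
    push_cast
    rfl
  have hlt : ‖param y‖ < 27 / 4 := by rwa [hparam, Complex.norm_real]
  have hsum := hasSum_series hlt
  rw [series_param isPrimitiveRoot_cubeRootOne (by simpa using hy) hlt,
    neg_two_mul_logSum_mul_logSum hy, hparam] at hsum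
  exact_mod_cast hsum

end InvChoose

theorem stmt_3_general {c : ℝ} (hc : 1 < |c|) (hx : |27 * c ^ 3 / (1 + c ^ 3) ^ 2| < 27 / 4) :
    HasSum (fun k : ℕ ↦ (27 * c ^ 3 / (1 + c ^ 3) ^ 2) ^ (k + 1) /
        (((k : ℝ) + 1) ^ 2 * ((3 * (k + 1)).choose (k + 1) : ℕ)))
      (6 * (Real.arctan (√3 / (2 * c - 1))) ^ 2 -
        1 / 2 * (Real.log ((c ^ 3 + 1) / (c + 1) ^ 3)) ^ 2) := by
  have hc0 : c ≠ 0 := by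
    rintro rfl
    norm_num at hc
  have hparam : 27 * c⁻¹ ^ 3 / (1 + c⁻¹ ^ 3) ^ 2 = 27 * c ^ 3 / (1 + c ^ 3) ^ 2 := by
    field_simp
    ring
  have harctan : √3 * c⁻¹ / (2 - c⁻¹) = √3 / (2 * c - 1) := by field_simp
  have hlog : (1 + c⁻¹ ^ 3) / (1 + c⁻¹) ^ 3 = (c ^ 3 + 1) / (c + 1) ^ 3 := by field_simp
  have hinv : |c⁻¹| < 1 := by
    rw [abs_inv]
    exact inv_lt_one_of_one_lt₀ hc
  have hsum := InvChoose.hasSum_of_abs_lt_one hinv (by rwa [hparam])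
  rwa [hparam, harctan, hlog] at hsum

theorem stmt_3 :
    ∑' k : ℕ, (6 : ℝ)^(k+1) / (((k:ℝ)+1)^2 * (((3*(k+1)).choose (k+1) : ℕ) : ℝ)) =
    6*(Real.arctan (Real.sqrt 3/(2*(2:ℝ)^((1:ℝ)/3) - 1)))^2 - (1/2)*(Real.log (3/((2:ℝ)^((1:ℝ)/3)+1)^3))^2 := by
  set c : ℝ := 2 ^ ((1 : ℝ) / 3)
  have hcube : c ^ 3 = 2 := by
    rw [← Real.rpow_mul_natCast zero_le_two]
    norm_num
  have hc : 1 < |c| := lt_abs.2 (.inl (Real.one_lt_rpow one_lt_two (by norm_num)))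
  have hsum := stmt_3_general hc (by rw [hcube]; norm_num)
  rw [hcube, show (27 * 2 / (1 + 2) ^ 2 : ℝ) = 6 by norm_num, two_add_one_eq_three] at hsum
  exact hsum.tsum_eq
end
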